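/- arXiv:math/0608199 — 3 statements merged into one kernel-verified Lean document; each statement's English description precedes it below -/
import Mathlib

section
/- Let G be a simple graph on n vertices with clique number ω, and for 1 ≤ s ≤ ω let k_s(G) denote the number of s-cliques of G. Then for every integer s with 1 ≤ s < ω, (k_s(G)/C(ω,s))^{1/s} ≥ (k_{s+1}(G)/C(ω,s+1))^{1/(s+1)}; in particular k_1(G)/C(ω,1) ≥ (k_2(G)/C(ω,2))^{1/2} ≥ ··· ≥ (k_ω(G)/C(ω,ω))^{1/ω}. -/
open Finset

/-! Give the vertices nonnegative weights and count each clique with the product of the weights of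
its vertices. For two nonadjacent vertices `u` and `v`, every clique contains at most one of them,
so the weighted clique counts are affine in the pair of weights of `u` and `v`. Weight can therefore
be moved from one of them to the other until one weight vanishes, keeping the count of `s`-cliques
and not decreasing that of `(s + 1)`-cliques. When no such pair is left, the weights live on a
single clique, the counts are elementary symmetric functions of at most `ω` numbers, and the
inequality is Maclaurin's, which telescopes from Newton's inequalities. -/

section Esymm

variable {R : Type*} [CommSemiring R]

lemma esymm_cons_succ (a : R) (M : Multiset R) (k : ℕ) :
    (a ::ₘ M).esymm (k + 1) = M.esymm (k + 1) + a * M.esymm k := by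
  simp [Multiset.esymm, Multiset.powersetCard_cons, Multiset.sum_map_mul_left]

lemma esymm_eq_zero_of_card_lt {M : Multiset R} {k : ℕ} (h : M.card < k) : M.esymm k = 0 := by
  simp [Multiset.esymm, Multiset.powersetCard_eq_empty _ h]

variable [PartialOrder R] [IsOrderedRing R]

lemma esymm_nonneg {M : Multiset R} (hM : ∀ a ∈ M, 0 ≤ a) (k : ℕ) : 0 ≤ M.esymm k := by
  refine Multiset.sum_nonneg fun p hp => ?_
  obtain ⟨S, hS, rfl⟩ := Multiset.mem_map.1 hp
  have hSM : S ≤ M := (Multiset.mem_powersetCard.1 hS).1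
  exact Multiset.prod_nonneg fun a ha => hM a (Multiset.mem_of_le hSM ha)

lemma esymm_succ_eq_zero {M : Multiset R} (hM : ∀ a ∈ M, 0 ≤ a) {k : ℕ}
    (h : M.esymm k = 0) : M.esymm (k + 1) = 0 := by
  nontriviality R
  induction M using Multiset.induction_on generalizing k with
  | empty => exact esymm_eq_zero_of_card_lt k.succ_pos
  | cons a M ih =>
    obtain ⟨ha, hM⟩ := Multiset.forall_mem_cons.1 hM
    cases k with
    | zero => simp [Multiset.esymm] at h
    | succ k =>
      rw [esymm_cons_succ, add_eq_zero_iff_of_nonneg (esymm_nonneg hM _)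
        (mul_nonneg ha (esymm_nonneg hM k))] at h
      rw [esymm_cons_succ, ih hM h.1, h.1, mul_zero, add_zero]

end Esymm

section EsymmMean

variable {K : Type*} [Field K]

/-- The `k`-th elementary symmetric mean of `M` completed by zeros to a multiset of `n` elements
(meaningful for `M.card ≤ n`). -/
def esymmMean (n : ℕ) (M : Multiset K) (k : ℕ) : K :=
  M.esymm k / n.choose k

lemma esymmMean_zero (n : ℕ) (M : Multiset K) : esymmMean n M 0 = 1 := by
  simp [esymmMean, Multiset.esymm]

lemma esymmMean_eq_zero_of_lt {n k : ℕ} (h : n < k) (M : Multiset K) : esymmMean n M k = 0 := by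
  simp [esymmMean, Nat.choose_eq_zero_of_lt h]

variable [CharZero K]

lemma choose_mul_esymmMean {n : ℕ} {M : Multiset K} (hM : M.card ≤ n) (k : ℕ) :
    n.choose k * esymmMean n M k = M.esymm k := by
  rcases le_or_gt k n with hk | hk
  · exact mul_div_cancel₀ _ (Nat.cast_ne_zero.2 (Nat.choose_pos hk).ne')
  · rw [esymmMean_eq_zero_of_lt hk, esymm_eq_zero_of_card_lt (hM.trans_lt hk), mul_zero]

lemma esymmMean_cons_succ {n k : ℕ} {M : Multiset K} (hM : M.card ≤ n) (hk : k ≤ n) (a : K) :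
    (n + 1) * esymmMean (n + 1) (a ::ₘ M) (k + 1) =
      (n - k) * esymmMean n M (k + 1) + (k + 1) * a * esymmMean n M k := by
  have hesymm := esymm_cons_succ a M k
  rw [← choose_mul_esymmMean hM, ← choose_mul_esymmMean hM,
    ← choose_mul_esymmMean (n := n + 1) (by simpa using hM)] at hesymm
  have hchoose : (n.choose k : K) ≠ 0 := Nat.cast_ne_zero.2 (Nat.choose_pos hk).ne'
  have hsucc : ((n : K) + 1) * n.choose k = (n + 1).choose (k + 1) * (k + 1) := by
    exact_mod_cast Nat.add_one_mul_choose_eq n k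
  have hright : (n.choose (k + 1) : K) * (k + 1) = n.choose k * (n - k) := by
    rw [← Nat.cast_sub hk]
    exact_mod_cast Nat.choose_succ_right_eq n k
  refine mul_left_cancel₀ hchoose ?_
  linear_combination (k + 1 : K) * hesymm + esymmMean (n + 1) (a ::ₘ M) (k + 1) * hsucc +
    esymmMean n M (k + 1) * hright

end EsymmMean

section Maclaurin

variable {K : Type*} [Field K] [LinearOrder K] [IsStrictOrderedRing K]

lemma esymmMean_nonneg (n : ℕ) {M : Multiset K} (hM : ∀ a ∈ M, 0 ≤ a) (k : ℕ) :
    0 ≤ esymmMean n M k :=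
  div_nonneg (esymm_nonneg hM k) (Nat.cast_nonneg _)

lemma esymmMean_succ_eq_zero {n k : ℕ} {M : Multiset K} (hM : ∀ a ∈ M, 0 ≤ a)
    (h : esymmMean n M k = 0) : esymmMean n M (k + 1) = 0 := by
  rcases div_eq_zero_iff.1 h with h | h
  · rw [esymmMean, esymm_succ_eq_zero hM h, zero_div]
  · have hnk : n < k := Nat.choose_eq_zero_iff.1 (Nat.cast_eq_zero.1 h)
    exact esymmMean_eq_zero_of_lt (hnk.trans k.lt_succ_self) M

lemma mul_le_mul_of_mul_le_sq {a b d e : K} (hb : 0 ≤ b) (hd : 0 ≤ d) (he : 0 ≤ e)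
    (hb₀ : b = 0 → e = 0) (hd₀ : d = 0 → e = 0) (had : a * d ≤ b ^ 2) (hbe : b * e ≤ d ^ 2) :
    a * e ≤ b * d := by
  rcases hb.eq_or_lt' with hb' | hb'
  · simp [hb', hb₀ hb']
  rcases hd.eq_or_lt' with hd' | hd'
  · simp [hd', hd₀ hd']
  refine le_of_mul_le_mul_right ?_ (mul_pos hb' hd')
  calc a * e * (b * d) = a * d * (b * e) := by ring
    _ ≤ b ^ 2 * d ^ 2 := by gcongr
    _ = b * d * (b * d) := by ring

/-- With `n` entries in `M` and `c = n - k`, read `a, b, d, e` as the means of `M` of orders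
`k - 1, …, k + 2` and `p, q, r` as those of `x ::ₘ M` of orders `k, k + 1, k + 2`. -/
lemma newton_step {a b d e p q r x c k n : K} (hx : 0 ≤ x) (hk : 0 ≤ k) (hc : 1 ≤ c) (hn : 0 ≤ n)
    (hp : (n + 1) * p = (c + 1) * b + k * x * a) (hq : (n + 1) * q = c * d + (k + 1) * x * b)
    (hr : (n + 1) * r = (c - 1) * e + (k + 2) * x * d) (had : k * (a * d) ≤ k * b ^ 2)
    (hbe : b * e ≤ d ^ 2) (hae : k * (a * e) ≤ k * (b * d)) : p * r ≤ q ^ 2 := by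
  have h₁ : 0 ≤ (c ^ 2 - 1) * (d ^ 2 - b * e) :=
    mul_nonneg (sub_nonneg.2 (one_le_pow₀ hc)) (sub_nonneg.2 hbe)
  have h₂ : 0 ≤ (k + 2) * x ^ 2 * (k * b ^ 2 - k * (a * d)) :=
    mul_nonneg (by positivity) (sub_nonneg.2 had)
  have h₃ : 0 ≤ (c - 1) * x * (k * (b * d) - k * (a * e)) :=
    mul_nonneg (mul_nonneg (sub_nonneg.2 hc) hx) (sub_nonneg.2 hae)
  have h₄ : 0 ≤ (d - x * b) ^ 2 := sq_nonneg _
  refine le_of_mul_le_mul_left ?_ (by positivity : 0 < (n + 1) ^ 2)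
  calc (n + 1) ^ 2 * (p * r) = ((n + 1) * p) * ((n + 1) * r) := by ring
    _ = ((c + 1) * b + k * x * a) * ((c - 1) * e + (k + 2) * x * d) := by rw [hp, hr]
    _ ≤ (c * d + (k + 1) * x * b) ^ 2 := by linear_combination h₁ + h₂ + h₃ + h₄
    _ = (n + 1) ^ 2 * q ^ 2 := by rw [← hq, mul_pow]

theorem esymmMean_mul_esymmMean_le_sq {n : ℕ} {M : Multiset K} (hM : ∀ a ∈ M, 0 ≤ a)
    (hn : M.card ≤ n) (k : ℕ) :
    esymmMean n M k * esymmMean n M (k + 2) ≤ esymmMean n M (k + 1) ^ 2 := by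
  induction M using Multiset.induction_on generalizing n k with
  | empty =>
    have hzero : esymmMean n (0 : Multiset K) (k + 2) = 0 := by
      rw [esymmMean, esymm_eq_zero_of_card_lt (by simp), zero_div]
    rw [hzero, mul_zero]
    exact sq_nonneg _
  | cons x M ih =>
    obtain ⟨hx, hM⟩ := Multiset.forall_mem_cons.1 hM
    rw [Multiset.card_cons] at hn
    obtain ⟨n, rfl⟩ := Nat.exists_eq_add_of_le' (Nat.one_le_of_lt hn)
    rw [Nat.add_le_add_iff_right] at hn
    rcases lt_or_ge n (k + 1) with hk | hk
    · rw [esymmMean_eq_zero_of_lt (by omega : n + 1 < k + 2), mul_zero]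
      exact sq_nonneg _
    have hc : (1 : K) ≤ n - k := by rw [le_sub_iff_add_le']; exact_mod_cast hk
    have hq := esymmMean_cons_succ hn (by omega : k ≤ n) x
    have hr := esymmMean_cons_succ hn hk x
    cases k with
    | zero =>
      refine newton_step (a := 0) hx le_rfl hc n.cast_nonneg ?_ (by simpa using hq) ?_ (by simp)
        (ih hM hn 0) (by simp)
      · simp [esymmMean_zero]
      · push_cast at hr ⊢
        linear_combination hr
    | succ j =>
      have hp := esymmMean_cons_succ hn (by omega : j ≤ n) x
      have hnonneg := esymmMean_nonneg n hM
      have hzero {i : ℕ} := esymmMean_succ_eq_zero (n := n) (k := i) hM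
      have had := ih hM hn j
      have hbe := ih hM hn (j + 1)
      have hae := mul_le_mul_of_mul_le_sq (hnonneg (j + 1)) (hnonneg (j + 2))
        (hnonneg (j + 3)) (fun h => hzero (hzero h)) hzero had hbe
      refine newton_step hx (k := (j + 1 : ℕ)) (Nat.cast_nonneg _) hc n.cast_nonneg ?_ hq ?_
        (by gcongr) hbe (by gcongr)
      all_goals push_cast at hp hr ⊢
      · linear_combination hp
      · linear_combination hr

theorem esymmMean_succ_pow_le {n : ℕ} {M : Multiset K} (hM : ∀ a ∈ M, 0 ≤ a)
    (hn : M.card ≤ n) (k : ℕ) : esymmMean n M (k + 1) ^ k ≤ esymmMean n M k ^ (k + 1) := by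
  induction k with
  | zero => simp [esymmMean_zero]
  | succ k ih =>
    have hnonneg := esymmMean_nonneg n hM
    rcases (hnonneg (k + 1)).eq_or_lt' with h | hpos
    · rw [esymmMean_succ_eq_zero hM h, h]
      simp
    refine le_of_mul_le_mul_left ?_ (pow_pos hpos k)
    calc esymmMean n M (k + 1) ^ k * esymmMean n M (k + 2) ^ (k + 1)
        ≤ esymmMean n M k ^ (k + 1) * esymmMean n M (k + 2) ^ (k + 1) :=
          mul_le_mul_of_nonneg_right ih (pow_nonneg (hnonneg _) _)
      _ = (esymmMean n M k * esymmMean n M (k + 2)) ^ (k + 1) := (mul_pow ..).symm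
      _ ≤ (esymmMean n M (k + 1) ^ 2) ^ (k + 1) :=
          pow_le_pow_left₀ (mul_nonneg (hnonneg _) (hnonneg _))
            (esymmMean_mul_esymmMean_le_sq hM hn k) _
      _ = esymmMean n M (k + 1) ^ k * esymmMean n M (k + 1) ^ (k + 2) := by ring

theorem esymm_maclaurin {n : ℕ} {M : Multiset K} (hM : ∀ a ∈ M, 0 ≤ a) (hn : M.card ≤ n) (k : ℕ) :
    M.esymm (k + 1) ^ k * n.choose k ^ (k + 1) ≤ M.esymm k ^ (k + 1) * n.choose (k + 1) ^ k := by
  rw [← choose_mul_esymmMean hn, ← choose_mul_esymmMean hn, mul_pow, mul_pow]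
  have := mul_le_mul_of_nonneg_left (esymmMean_succ_pow_le hM hn k)
    (by positivity : (0 : K) ≤ n.choose (k + 1) ^ k * n.choose k ^ (k + 1))
  linear_combination this

end Maclaurin

section WeightedCliqueCount

variable {V : Type*} [Fintype V] [DecidableEq V]

/-- The number of `s`-cliques of `G`, each counted with the product of the weights `x` of its
vertices; for `x = 1` this is `k_s(G)`. -/
def weightedCliqueCount {R : Type*} [CommSemiring R] (G : SimpleGraph V) [DecidableRel G.Adj]
    (s : ℕ) (x : V → R) : R :=
  ∑ S ∈ G.cliqueFinset s, ∏ i ∈ S, x i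

variable {G : SimpleGraph V} [DecidableRel G.Adj]

section CommSemiring

variable {R : Type*} [CommSemiring R]

variable (G) in
lemma weightedCliqueCount_one (s : ℕ) :
    weightedCliqueCount G s (1 : V → R) = #(G.cliqueFinset s) := by
  simp [weightedCliqueCount]

lemma weightedCliqueCount_of_isClique {A : Finset V} (hA : G.IsClique (A : Set V)) {x : V → R}
    (hx : Function.support x ⊆ A) (s : ℕ) :
    weightedCliqueCount G s x = (A.val.map x).esymm s := by
  rw [Finset.esymm_map_val, weightedCliqueCount]
  refine (Finset.sum_subset (fun S hS => ?_) fun S hS hSA => ?_).symm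
  · obtain ⟨hSA, hcard⟩ := mem_powersetCard.1 hS
    exact SimpleGraph.mem_cliqueFinset_iff.2 ⟨hA.subset (coe_subset.2 hSA), hcard⟩
  · have hcard := (SimpleGraph.mem_cliqueFinset_iff.1 hS).card_eq
    obtain ⟨i, hiS, hiA⟩ := not_subset.1 fun h => hSA (mem_powersetCard.2 ⟨h, hcard⟩)
    exact prod_eq_zero hiS (Function.notMem_support.1 fun h => hiA (hx h))

variable (G) in
lemma sum_cliqueFinset_succ_prod_erase (s : ℕ) (x : V → R) (u : V) :
    ∑ S ∈ G.cliqueFinset (s + 1) with u ∈ S, ∏ i ∈ S.erase u, x i =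
      weightedCliqueCount G s ((G.neighborSet u).indicator x) := by
  have hind (T : Finset V) : ∏ i ∈ T, (G.neighborSet u).indicator x i =
      if ∀ i ∈ T, G.Adj u i then ∏ i ∈ T, x i else 0 := by
    classical
    simp only [Set.indicator_apply, SimpleGraph.mem_neighborSet, prod_ite_zero]
    congr
  simp only [weightedCliqueCount, hind, ← sum_filter]
  refine sum_bij' (fun S _ => S.erase u) (fun T _ => insert u T) ?_ ?_ ?_ ?_ fun _ _ => rfl
  all_goals simp only [mem_filter, SimpleGraph.mem_cliqueFinset_iff]
  · rintro S ⟨hS, hu⟩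
    exact ⟨hS.erase_of_mem hu, fun i hi =>
      hS.isClique hu (mem_of_mem_erase hi) (ne_of_mem_erase hi).symm⟩
  · rintro T ⟨hT, hadj⟩
    exact ⟨hT.insert hadj, mem_insert_self u T⟩
  · rintro S ⟨-, hu⟩
    exact insert_erase hu
  · rintro T ⟨-, hadj⟩
    exact erase_insert fun hu => (hadj u hu).ne rfl

variable (G) in
lemma weightedCliqueCount_succ_update (s : ℕ) (x : V → R) (u : V) (a : R) :
    weightedCliqueCount G (s + 1) (Function.update x u a) =
      weightedCliqueCount G (s + 1) (Function.update x u 0) +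
        a * weightedCliqueCount G s ((G.neighborSet u).indicator x) := by
  rw [← sum_cliqueFinset_succ_prod_erase, mul_sum, sum_filter, weightedCliqueCount,
    weightedCliqueCount, ← sum_add_distrib]
  refine sum_congr rfl fun S _ => ?_
  by_cases hu : u ∈ S
  · simp [hu, prod_update_of_mem, sdiff_singleton_eq_erase]
  · simp [hu, prod_update_of_notMem]

lemma weightedCliqueCount_succ_update_update (s : ℕ) (x : V → R) {u v : V} (huv : u ≠ v)
    (hadj : ¬ G.Adj u v) (a b : R) :
    weightedCliqueCount G (s + 1) (Function.update (Function.update x u a) v b) =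
      weightedCliqueCount G (s + 1) (Function.update (Function.update x u 0) v 0) +
        a * weightedCliqueCount G s ((G.neighborSet u).indicator x) +
        b * weightedCliqueCount G s ((G.neighborSet v).indicator x) := by
  have hind {w w' : V} (hw : ¬ G.Adj w w') (c : R) :
      (G.neighborSet w).indicator (Function.update x w' c) = (G.neighborSet w).indicator x :=
    Set.indicator_congr fun i hi => Function.update_of_ne (by rintro rfl; exact hw hi) _ _
  rw [weightedCliqueCount_succ_update, hind (fun h => hadj h.symm), Function.update_comm huv,
    weightedCliqueCount_succ_update, hind hadj, Function.update_comm huv.symm]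

end CommSemiring

section Ordered

variable {R : Type*} [CommSemiring R] [PartialOrder R] [IsOrderedRing R]

variable (G) in
lemma weightedCliqueCount_nonneg {x : V → R} (hx : 0 ≤ x) (s : ℕ) :
    0 ≤ weightedCliqueCount G s x :=
  sum_nonneg fun _ _ => prod_nonneg fun i _ => hx i

lemma weightedCliqueCount_succ_eq_zero {x : V → R} (hx : 0 ≤ x) {s : ℕ}
    (h : weightedCliqueCount G s x = 0) : weightedCliqueCount G (s + 1) x = 0 := by
  have hzero := (sum_eq_zero_iff_of_nonneg fun S _ => prod_nonneg fun i _ => hx i).1 h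
  refine sum_eq_zero fun S hS => ?_
  rw [SimpleGraph.mem_cliqueFinset_iff] at hS
  obtain ⟨i, hi⟩ := card_pos.1 (hS.card_eq.symm ▸ s.succ_pos : 0 < #S)
  rw [← mul_prod_erase S x hi,
    hzero _ (SimpleGraph.mem_cliqueFinset_iff.2 (hS.erase_of_mem hi)), mul_zero]

end Ordered

section OrderedField

variable {K : Type*} [Field K] [LinearOrder K] [IsStrictOrderedRing K]

lemma exists_eq_zero_or_eq_zero_and_add_le {a b B C B' C' : K} (ha : 0 ≤ a) (hb : 0 ≤ b)
    (hB : 0 ≤ B) (hC : 0 ≤ C) (hB' : B = 0 → B' = 0) (hC' : C = 0 → C' = 0) :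
    ∃ a' b' : K, 0 ≤ a' ∧ 0 ≤ b' ∧ (a' = 0 ∨ b' = 0) ∧
      a' * B + b' * C = a * B + b * C ∧ a * B' + b * C' ≤ a' * B' + b' * C' := by
  wlog h : B' * C ≤ C' * B generalizing a b B C B' C'
  · obtain ⟨b', a', hb', ha', hzero, heq, hle⟩ := this hb ha hC hB hC' hB' (le_of_not_ge h)
    exact ⟨a', b', ha', hb', hzero.symm, by rwa [add_comm, add_comm (a * B)],
      by rwa [add_comm, add_comm (a' * B')]⟩
  rcases hC.eq_or_lt' with hC₀ | hC
  · exact ⟨a, 0, ha, le_rfl, .inr rfl, by simp [hC₀], by simp [hC' hC₀]⟩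
  · refine ⟨0, b + a * B / C, le_rfl, by positivity, .inl rfl, by field_simp; ring, ?_⟩
    have hgain : B' ≤ C' * B / C := (le_div_iff₀ hC).2 h
    linear_combination a * hgain

lemma exists_support_ssubset_of_not_adj {x : V → K} (hx : 0 ≤ x) {u v : V}
    (hu : u ∈ Function.support x) (hv : v ∈ Function.support x) (huv : u ≠ v)
    (hadj : ¬ G.Adj u v) (s : ℕ) :
    ∃ y : V → K, 0 ≤ y ∧ Function.support y ⊂ Function.support x ∧
      weightedCliqueCount G (s + 1) y = weightedCliqueCount G (s + 1) x ∧
      weightedCliqueCount G (s + 2) x ≤ weightedCliqueCount G (s + 2) y := by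
  have hind (w : V) : 0 ≤ (G.neighborSet w).indicator x := Set.indicator_nonneg fun i _ => hx i
  obtain ⟨a, b, ha, hb, hab, heq, hle⟩ := exists_eq_zero_or_eq_zero_and_add_le (hx u) (hx v)
    (weightedCliqueCount_nonneg G (hind u) s) (weightedCliqueCount_nonneg G (hind v) s)
    (weightedCliqueCount_succ_eq_zero (hind u)) (weightedCliqueCount_succ_eq_zero (hind v))
  have hcount (t : ℕ) := weightedCliqueCount_succ_update_update t x huv hadj
  have hcount_self (t : ℕ) : weightedCliqueCount G (t + 1) x =
      weightedCliqueCount G (t + 1) (Function.update (Function.update x u 0) v 0) +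
        x u * weightedCliqueCount G t ((G.neighborSet u).indicator x) +
        x v * weightedCliqueCount G t ((G.neighborSet v).indicator x) := by
    simpa using hcount t (x u) (x v)
  refine ⟨Function.update (Function.update x u a) v b, ?_, ?_, ?_, ?_⟩
  · have hxu : 0 ≤ Function.update x u a := le_update_iff.2 ⟨ha, fun i _ => hx i⟩
    exact le_update_iff.2 ⟨hb, fun i _ => hxu i⟩
  · refine Set.ssubset_iff_exists.2 ⟨fun i hi => ?_, ?_⟩
    · by_cases hiv : i = v
      · exact hiv ▸ hv
      by_cases hiu : i = u
      · exact hiu ▸ hu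
      simpa [hiv, hiu] using hi
    · rcases hab with rfl | rfl
      · exact ⟨u, hu, by simp [huv]⟩
      · exact ⟨v, hv, by simp⟩
  · rw [hcount, hcount_self]
    linear_combination heq
  · rw [hcount, hcount_self]
    linear_combination hle

theorem weightedCliqueCount_maclaurin {x : V → K} (hx : 0 ≤ x) (s : ℕ) :
    weightedCliqueCount G (s + 1) x ^ s * G.cliqueNum.choose s ^ (s + 1) ≤
      weightedCliqueCount G s x ^ (s + 1) * G.cliqueNum.choose (s + 1) ^ s := by
  obtain _ | s := s
  · have hzero : G.cliqueFinset 0 = {∅} := by ext S; simp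
    simp [weightedCliqueCount, hzero]
  induction hS : Function.support x using WellFoundedLT.induction generalizing x with
  | ind S ih =>
  subst hS
  by_cases hclique : G.IsClique (Function.support x)
  · classical
    set A : Finset V := (Function.support x).toFinset
    have hA : G.IsClique (A : Set V) := by simpa [A] using hclique
    have hcount := weightedCliqueCount_of_isClique hA (x := x) (by simp [A])
    rw [hcount, hcount]
    refine esymm_maclaurin (by simpa using fun i _ => hx i) ?_ (s + 1)
    simpa using SimpleGraph.IsClique.card_le_cliqueNum (tc := hA)
  · obtain ⟨u, hu, v, hv, huv, hadj⟩ : ∃ u ∈ Function.support x, ∃ v ∈ Function.support x,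
        u ≠ v ∧ ¬ G.Adj u v := by
      simpa [SimpleGraph.IsClique, Set.Pairwise] using hclique
    obtain ⟨y, hy, hsupp, heq, hle⟩ := exists_support_ssubset_of_not_adj hx hu hv huv hadj s
    have hnonneg := weightedCliqueCount_nonneg G hx (s + 2)
    have hstep := ih _ hsupp hy rfl
    rw [heq] at hstep
    refine le_trans ?_ hstep
    gcongr

end OrderedField

end WeightedCliqueCount

lemma rpow_one_div_succ_le_of_pow_le {p q : ℝ} (hp : 0 ≤ p) (hq : 0 ≤ q) {s : ℕ} (hs : 1 ≤ s)
    (h : p ^ s ≤ q ^ (s + 1)) : p ^ ((1 : ℝ) / (s + 1)) ≤ q ^ ((1 : ℝ) / s) := by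
  have hs₀ : (0 : ℝ) < s := by exact_mod_cast hs
  rw [one_div, one_div, Real.le_rpow_inv_iff_of_pos (by positivity) hq hs₀, ← Real.rpow_mul hp,
    mul_comm, Real.rpow_mul hp, Real.rpow_inv_le_iff_of_pos (by positivity) hq (by positivity)]
  exact_mod_cast h

theorem clique_count_maclaurin_general {V : Type*} [Fintype V] [DecidableEq V] (G : SimpleGraph V)
    [DecidableRel G.Adj] {x : V → ℝ} (hx : 0 ≤ x) (s : ℕ) (hs : 1 ≤ s) (hsw : s < G.cliqueNum) :
    (weightedCliqueCount G (s + 1) x / G.cliqueNum.choose (s + 1)) ^ ((1 : ℝ) / (s + 1)) ≤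
      (weightedCliqueCount G s x / G.cliqueNum.choose s) ^ ((1 : ℝ) / s) := by
  have hnonneg := weightedCliqueCount_nonneg G hx
  refine rpow_one_div_succ_le_of_pow_le (div_nonneg (hnonneg _) (Nat.cast_nonneg _))
    (div_nonneg (hnonneg _) (Nat.cast_nonneg _)) hs ?_
  have hchoose {t : ℕ} (ht : t ≤ G.cliqueNum) : (0 : ℝ) < G.cliqueNum.choose t :=
    Nat.cast_pos.2 (Nat.choose_pos ht)
  rw [div_pow, div_pow, div_le_div_iff₀ (pow_pos (hchoose hsw) _) (pow_pos (hchoose hsw.le) _)]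
  exact weightedCliqueCount_maclaurin hx s

/-- The combinatorial form of the extended Maclaurin inequality:
for a graph `G` with clique number `ω` and `1 ≤ s < ω`,
`(k_{s+1}(G)/C(ω,s+1))^{1/(s+1)} ≤ (k_s(G)/C(ω,s))^{1/s}`,
where `k_s(G)` is the number of `s`-cliques of `G`. -/
theorem clique_count_maclaurin {n : ℕ} (G : SimpleGraph (Fin n)) [DecidableRel G.Adj]
    (s : ℕ) (hs : 1 ≤ s) (hsw : s < G.cliqueNum) :
    ((#(G.cliqueFinset (s + 1)) : ℝ) / (G.cliqueNum.choose (s + 1) : ℝ))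
        ^ ((1 : ℝ) / ((s : ℝ) + 1))
      ≤ ((#(G.cliqueFinset s) : ℝ) / (G.cliqueNum.choose s : ℝ)) ^ ((1 : ℝ) / (s : ℝ)) := by
  simpa only [weightedCliqueCount_one] using
    clique_count_maclaurin_general G (x := 1) zero_le_one s hs hsw
end

section
/- Let G be a simple graph on vertex set [n] and let s be an integer with 1 ≤ s < ω(G). Then the function x ↦ f_{s+1}(G,x) attains a maximum on the set S_s(G) = {x ∈ ℝ^n : x ≥ 0 and f_s(G,x) = 1}; that is, there exists y ∈ S_s(G) such that f_{s+1}(G,y) ≥ f_{s+1}(G,x) for all x ∈ S_s(G). -/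
open Finset

/-- `fClique G s x` is the clique polynomial `f_s(G,x) = Σ_{S an s-clique of G} Π_{i ∈ S} x_i`. -/
def fClique {n : ℕ} (G : SimpleGraph (Fin n)) [DecidableRel G.Adj] (s : ℕ)
    (x : Fin n → ℝ) : ℝ :=
  ∑ S ∈ G.cliqueFinset s, ∏ i ∈ S, x i

/-!
Weights on two non-adjacent vertices `i`, `j` enter every `f_s` affinely and without interaction,
so with the other weights fixed, `f_s` and `f_{s+1}` are both affine in `(x_i, x_j)`. Moving along
a level line of `f_s` in the direction in which `f_{s+1}` does not decrease, one of the two weights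
reaches zero; by iteration (Motzkin–Straus symmetrization) it suffices to maximize over weights
whose support is a clique. For these, `f_s = 1` together with `f_{s+1} ≥ c > 0` bounds every
weight: some `(s+1)`-clique has all its weights bounded below, and any further vertex in the
support forms an `s`-clique with `s - 1` of its vertices. Compactness then provides the maximum.
-/

open Function

section CliquePolynomial

variable {n : ℕ} (G : SimpleGraph (Fin n)) [DecidableRel G.Adj]

/-- The partial derivative `∂f_s(G,x)/∂x_i`: the clique polynomial `f_{s-1}` of the link of `i`. It
gives the effect on `f_s` of changing the single weight `x_i`. -/
def fCliquePartial (s : ℕ) (i : Fin n) (x : Fin n → ℝ) : ℝ :=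
  ∑ S ∈ G.cliqueFinset s with i ∈ S, ∏ k ∈ S.erase i, x k

/-- The set `S_s(G)` of nonnegative weights normalized by `f_s(G,x) = 1`. -/
def cliqueConstraintSet (s : ℕ) : Set (Fin n → ℝ) :=
  {x | 0 ≤ x ∧ fClique G s x = 1}

variable {G} {s : ℕ} {x : Fin n → ℝ} {i j : Fin n}

lemma erase_mem_cliqueFinset {S : Finset (Fin n)} (hS : S ∈ G.cliqueFinset (s + 1)) (hi : i ∈ S) :
    S.erase i ∈ G.cliqueFinset s := by
  rw [SimpleGraph.mem_cliqueFinset_iff] at hS ⊢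
  exact hS.erase_of_mem hi

lemma cliqueFinset_nonempty_of_le_cliqueNum (h : s ≤ G.cliqueNum) :
    (G.cliqueFinset s).Nonempty := by
  obtain ⟨W, hW⟩ := G.exists_isNClique_cliqueNum
  obtain ⟨K, hKW, hK⟩ := exists_subset_card_eq (h.trans_eq hW.card_eq.symm)
  exact ⟨K, SimpleGraph.mem_cliqueFinset_iff.2
    ⟨hW.isClique.subset (coe_subset.2 hKW), hK⟩⟩

variable (G s) in
lemma continuous_fClique : Continuous (fClique G s) := by
  unfold fClique
  fun_prop

lemma fClique_const (t : ℝ) : fClique G s (fun _ ↦ t) = #(G.cliqueFinset s) * t ^ s := by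
  rw [fClique, ← nsmul_eq_mul]
  refine sum_eq_card_nsmul fun S hS ↦ ?_
  rw [prod_const, (SimpleGraph.mem_cliqueFinset_iff.1 hS).card_eq]

lemma fClique_nonneg (hx : 0 ≤ x) : 0 ≤ fClique G s x :=
  sum_nonneg fun _ _ ↦ prod_nonneg fun k _ ↦ hx k

lemma prod_le_fClique (hx : 0 ≤ x) {S : Finset (Fin n)} (hS : S ∈ G.cliqueFinset s) :
    ∏ k ∈ S, x k ≤ fClique G s x :=
  single_le_sum (f := fun S ↦ ∏ k ∈ S, x k) (fun _ _ ↦ prod_nonneg fun k _ ↦ hx k) hS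

lemma prod_le_apply_mul_fClique (hx : 0 ≤ x) {T : Finset (Fin n)}
    (hT : T ∈ G.cliqueFinset (s + 1)) (hi : i ∈ T) :
    ∏ k ∈ T, x k ≤ x i * fClique G s x := by
  rw [← mul_prod_erase T x hi]
  exact mul_le_mul_of_nonneg_left (prod_le_fClique hx (erase_mem_cliqueFinset hT hi)) (hx i)

lemma exists_clique_div_card_le_prod (h : 0 < fClique G s x) :
    ∃ T ∈ G.cliqueFinset s, fClique G s x / #(G.cliqueFinset s) ≤ ∏ k ∈ T, x k := by
  have hne : (G.cliqueFinset s).Nonempty := nonempty_of_sum_ne_zero h.ne'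
  have hcard : (#(G.cliqueFinset s) : ℝ) ≠ 0 := by exact_mod_cast hne.card_pos.ne'
  refine exists_le_of_sum_le hne ?_
  rw [sum_const, nsmul_eq_mul, mul_div_cancel₀ _ hcard, fClique]

lemma exists_mem_cliqueConstraintSet_fClique_pos (hs : s ≠ 0) (hsw : s < G.cliqueNum) :
    ∃ x ∈ cliqueConstraintSet G s, 0 < fClique G (s + 1) x := by
  have hK : 0 < (#(G.cliqueFinset s) : ℝ) := by
    exact_mod_cast (cliqueFinset_nonempty_of_le_cliqueNum hsw.le).card_pos
  have hK' : 0 < (#(G.cliqueFinset (s + 1)) : ℝ) := by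
    exact_mod_cast (cliqueFinset_nonempty_of_le_cliqueNum hsw).card_pos
  obtain ⟨t, ht, hts⟩ : ∃ t : ℝ, 0 < t ∧ t ^ s = (#(G.cliqueFinset s) : ℝ)⁻¹ :=
    ⟨_, Real.rpow_pos_of_pos (inv_pos.2 hK) _, Real.rpow_inv_natCast_pow (inv_pos.2 hK).le hs⟩
  refine ⟨fun _ ↦ t, ⟨fun _ ↦ ht.le, ?_⟩, ?_⟩
  · rw [fClique_const, hts, mul_inv_cancel₀ hK.ne']
  · rw [fClique_const]
    positivity

lemma fCliquePartial_nonneg (hx : 0 ≤ x) : 0 ≤ fCliquePartial G s i x :=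
  sum_nonneg fun _ _ ↦ prod_nonneg fun k _ ↦ hx k

lemma fClique_update (p : ℝ) :
    fClique G s (update x i p) = fClique G s x + (p - x i) * fCliquePartial G s i x := by
  rw [fClique, fClique, fCliquePartial, mul_sum, sum_filter, ← sum_add_distrib]
  refine sum_congr rfl fun S _ ↦ ?_
  split_ifs with hi
  · rw [prod_update_of_mem hi, sdiff_singleton_eq_erase, ← mul_prod_erase S x hi]
    ring
  · rw [prod_update_of_notMem hi, add_zero]

lemma fCliquePartial_update_of_not_adj (hadj : ¬G.Adj i j) (q : ℝ) :
    fCliquePartial G s i (update x j q) = fCliquePartial G s i x := by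
  refine sum_congr rfl fun S hS ↦ prod_update_of_notMem (fun hj ↦ hadj ?_) x q
  obtain ⟨hji, hjS⟩ := mem_erase.1 hj
  obtain ⟨hS, hiS⟩ := mem_filter.1 hS
  exact (SimpleGraph.mem_cliqueFinset_iff.1 hS).isClique hiS hjS hji.symm

lemma fClique_update_update (hij : i ≠ j) (hadj : ¬G.Adj i j) (p q : ℝ) :
    fClique G s (update (update x i p) j q) =
      fClique G s x + ((p - x i) * fCliquePartial G s i x +
        (q - x j) * fCliquePartial G s j x) := by
  rw [fClique_update, fClique_update, update_of_ne hij.symm,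
    fCliquePartial_update_of_not_adj (mt SimpleGraph.Adj.symm hadj), add_assoc]

lemma fCliquePartial_succ_eq_zero (hx : 0 ≤ x) (h : fCliquePartial G (s + 1) i x = 0) :
    fCliquePartial G (s + 2) i x = 0 := by
  have hprod := (sum_eq_zero_iff_of_nonneg fun _ _ ↦ prod_nonneg fun k _ ↦ hx k).1 h
  refine sum_eq_zero fun S hS ↦ ?_
  obtain ⟨hS, hiS⟩ := mem_filter.1 hS
  have hcard : 1 < #S := by rw [(SimpleGraph.mem_cliqueFinset_iff.1 hS).card_eq]; omega
  obtain ⟨w, hwS, hwi⟩ := exists_mem_ne hcard i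
  have hSw : S.erase w ∈ {S ∈ G.cliqueFinset (s + 1) | i ∈ S} :=
    mem_filter.2 ⟨erase_mem_cliqueFinset hS hwS, mem_erase.2 ⟨hwi.symm, hiS⟩⟩
  rw [← mul_prod_erase _ _ (mem_erase.2 ⟨hwi, hwS⟩), erase_right_comm, hprod _ hSw, mul_zero]

end CliquePolynomial

section Symmetrization

lemma exists_level_line_axis_point {p q b c d e : ℝ} (hp : 0 ≤ p) (hq : 0 ≤ q) (hb : 0 ≤ b)
    (hc : 0 ≤ c) (hbd : b = 0 → d = 0) (hce : c = 0 → e = 0) :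
    ∃ p' q' : ℝ, 0 ≤ p' ∧ 0 ≤ q' ∧ p' * q' = 0 ∧ (p' - p) * b + (q' - q) * c = 0 ∧
      0 ≤ (p' - p) * d + (q' - q) * e := by
  wlog h : b * e ≤ c * d generalizing p q b c d e
  · obtain ⟨q', p', hq', hp', hpq, hlevel, hmono⟩ :=
      this hq hp hc hb hce hbd (le_of_not_ge h)
    exact ⟨p', q', hp', hq', by linarith, by linarith, by linarith⟩
  obtain rfl | hb := hb.eq_or_lt
  · exact ⟨0, q, le_rfl, hq, zero_mul q, by ring, by simp [hbd rfl]⟩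
  · refine ⟨p + q * c / b, 0, by positivity, le_rfl, mul_zero _, by field_simp; ring, ?_⟩
    have hgain : (p + q * c / b - p) * d + (0 - q) * e = q * (c * d - b * e) / b := by
      field_simp
      ring
    rw [hgain]
    exact div_nonneg (mul_nonneg hq (sub_nonneg.2 h)) hb.le

lemma support_update_update_ssubset {ι M : Type*} [DecidableEq ι] [MulZeroClass M]
    [NoZeroDivisors M] {x : ι → M} {i j : ι} {p q : M} (hij : i ≠ j) (hi : x i ≠ 0)
    (hj : x j ≠ 0) (hpq : p * q = 0) :
    support (update (update x i p) j q) ⊂ support x := by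
  refine (Set.ssubset_iff_of_subset fun k hk ↦ ?_).2 ?_
  · obtain rfl | hkj := eq_or_ne k j
    · exact hj
    obtain rfl | hki := eq_or_ne k i
    · exact hi
    rwa [mem_support, update_of_ne hkj, update_of_ne hki] at hk
  · obtain rfl | rfl := mul_eq_zero.1 hpq
    · exact ⟨i, hi, by simp [hij]⟩
    · exact ⟨j, hj, by simp⟩

variable {n : ℕ} {G : SimpleGraph (Fin n)} [DecidableRel G.Adj] {s : ℕ} {x : Fin n → ℝ}

lemma exists_support_ssubset_of_not_isClique (hx : 0 ≤ x) (hclique : ¬G.IsClique (support x)) :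
    ∃ z : Fin n → ℝ, 0 ≤ z ∧ fClique G (s + 1) z = fClique G (s + 1) x ∧
      fClique G (s + 2) x ≤ fClique G (s + 2) z ∧ support z ⊂ support x := by
  obtain ⟨i, hi, j, hj, hij, hadj⟩ :
      ∃ i ∈ support x, ∃ j ∈ support x, i ≠ j ∧ ¬G.Adj i j := by
    simpa [SimpleGraph.IsClique, Set.Pairwise] using hclique
  obtain ⟨p, q, hp, hq, hpq, hlevel, hmono⟩ :=
    exists_level_line_axis_point (hx i) (hx j) (fCliquePartial_nonneg hx)
      (fCliquePartial_nonneg hx) (fCliquePartial_succ_eq_zero (G := G) (s := s) hx)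
      (fCliquePartial_succ_eq_zero (G := G) (s := s) hx)
  have hxp : 0 ≤ update x i p := le_update_iff.2 ⟨hp, fun k _ ↦ hx k⟩
  refine ⟨update (update x i p) j q, ?_, ?_, ?_, support_update_update_ssubset hij hi hj hpq⟩
  · exact le_update_iff.2 ⟨hq, fun k _ ↦ hxp k⟩
  · rw [fClique_update_update hij hadj, hlevel, add_zero]
  · rw [fClique_update_update hij hadj]
    exact le_add_of_nonneg_right hmono

lemma exists_isClique_support_fClique_le (hx : 0 ≤ x) :
    ∃ z : Fin n → ℝ, 0 ≤ z ∧ fClique G (s + 1) z = fClique G (s + 1) x ∧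
      fClique G (s + 2) x ≤ fClique G (s + 2) z ∧ G.IsClique (support z) := by
  induction hS : support x using WellFoundedLT.induction generalizing x with
  | ind S ih =>
    subst hS
    by_cases hclique : G.IsClique (support x)
    · exact ⟨x, hx, rfl, le_rfl, hclique⟩
    · obtain ⟨y, hy, hxy, hle, hlt⟩ := exists_support_ssubset_of_not_isClique (s := s) hx hclique
      obtain ⟨z, hz, hyz, hle', hzclique⟩ := ih _ hlt hy rfl
      exact ⟨z, hz, hyz.trans hxy, hle.trans hle', hzclique⟩

end Symmetrization

section CliqueSupport

lemma isClosed_setOf_isClique_support {M : Type*} [TopologicalSpace M] [T1Space M]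
    [MulZeroClass M] [NoZeroDivisors M] [ContinuousMul M] {V : Type*} (G : SimpleGraph V) :
    IsClosed {x : V → M | G.IsClique (support x)} := by
  have hset : {x : V → M | G.IsClique (support x)} =
      {x | ∀ i j, i ≠ j → ¬G.Adj i j → x i * x j = 0} := by
    ext x
    simp only [SimpleGraph.IsClique, Set.Pairwise, mem_support, Set.mem_ofPred_eq, mul_eq_zero]
    grind
  simp only [hset, Set.ofPred_forall]
  exact isClosed_iInter fun i ↦ isClosed_iInter fun j ↦ isClosed_iInter fun _ ↦
    isClosed_iInter fun _ ↦ isClosed_singleton.preimage (by fun_prop)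

variable {n : ℕ} {G : SimpleGraph (Fin n)} [DecidableRel G.Adj] {s : ℕ} {x : Fin n → ℝ}

lemma isClosed_cliqueConstraintSet : IsClosed (cliqueConstraintSet G s) :=
  isClosed_Ici.inter (isClosed_singleton.preimage (continuous_fClique G s))

lemma apply_mul_pow_le_fClique (hx : 0 ≤ x) (hclique : G.IsClique (support x)) {δ : ℝ}
    (hδ : 0 < δ) {T : Finset (Fin n)} (hT : s < #T) (hδT : ∀ w ∈ T, δ ≤ x w) (v : Fin n) :
    x v * δ ^ s ≤ fClique G (s + 1) x := by
  by_cases hv : x v = 0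
  · rw [hv, zero_mul]
    exact fClique_nonneg hx
  obtain ⟨U, hU, hUcard⟩ : ∃ U ⊆ T.erase v, #U = s :=
    exists_subset_card_eq ((Nat.le_sub_one_of_lt hT).trans pred_card_le_card_erase)
  have hvU : v ∉ U := fun hv ↦ notMem_erase v T (hU hv)
  have hδU : ∀ w ∈ U, δ ≤ x w := fun w hw ↦ hδT w (mem_of_mem_erase (hU hw))
  have hsupp : ↑(insert v U) ⊆ support x := by
    rw [coe_insert, Set.insert_subset_iff]
    exact ⟨hv, fun w hw ↦ (hδ.trans_le (hδU w hw)).ne'⟩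
  have hmem : insert v U ∈ G.cliqueFinset (s + 1) := SimpleGraph.mem_cliqueFinset_iff.2
    ⟨hclique.subset hsupp, by rw [card_insert_of_notMem hvU, hUcard]⟩
  calc x v * δ ^ s = x v * ∏ _w ∈ U, δ := by rw [prod_const, hUcard]
    _ ≤ x v * ∏ w ∈ U, x w :=
      mul_le_mul_of_nonneg_left (prod_le_prod (fun _ _ ↦ hδ.le) hδU) (hx v)
    _ = ∏ w ∈ insert v U, x w := (prod_insert hvU).symm
    _ ≤ fClique G (s + 1) x := prod_le_fClique hx hmem

lemma apply_mul_pow_le_one (hx : x ∈ cliqueConstraintSet G (s + 1))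
    (hclique : G.IsClique (support x)) {c : ℝ} (hc : 0 < c) (hcx : c ≤ fClique G (s + 2) x)
    (v : Fin n) : x v * (c / #(G.cliqueFinset (s + 2))) ^ s ≤ 1 := by
  obtain ⟨hx, hx1⟩ := hx
  obtain ⟨T, hT, hprod⟩ := exists_clique_div_card_le_prod (hc.trans_le hcx)
  have hcard : 0 < (#(G.cliqueFinset (s + 2)) : ℝ) := by exact_mod_cast card_pos.2 ⟨T, hT⟩
  have hδT : ∀ w ∈ T, c / #(G.cliqueFinset (s + 2)) ≤ x w := fun w hw ↦ calc
    c / #(G.cliqueFinset (s + 2)) ≤ fClique G (s + 2) x / #(G.cliqueFinset (s + 2)) := by gcongr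
    _ ≤ ∏ k ∈ T, x k := hprod
    _ ≤ x w * fClique G (s + 1) x := prod_le_apply_mul_fClique hx hT hw
    _ = x w := by rw [hx1, mul_one]
  have hTcard : s < #T := by rw [(SimpleGraph.mem_cliqueFinset_iff.1 hT).card_eq]; omega
  exact (apply_mul_pow_le_fClique hx hclique (div_pos hc hcard) hTcard hδT v).trans_eq hx1

lemma exists_isMaxOn_cliqueConstraintSet_isClique_support {u : Fin n → ℝ}
    (hu : u ∈ cliqueConstraintSet G (s + 1)) (huclique : G.IsClique (support u))
    (hpos : 0 < fClique G (s + 2) u) :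
    ∃ y ∈ cliqueConstraintSet G (s + 1) ∩ {x | G.IsClique (support x)},
      IsMaxOn (fClique G (s + 2)) (cliqueConstraintSet G (s + 1) ∩ {x | G.IsClique (support x)})
        y := by
  obtain ⟨T, hT⟩ : (G.cliqueFinset (s + 2)).Nonempty := nonempty_of_sum_ne_zero hpos.ne'
  have hcard : 0 < (#(G.cliqueFinset (s + 2)) : ℝ) := by exact_mod_cast card_pos.2 ⟨T, hT⟩
  refine (continuous_fClique G (s + 2)).continuousOn.exists_isMaxOn'
    (isClosed_cliqueConstraintSet.inter (isClosed_setOf_isClique_support G)) ⟨hu, huclique⟩ ?_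
  rw [Filter.eventually_inf_principal]
  let R : ℝ := 1 / (fClique G (s + 2) u / #(G.cliqueFinset (s + 2))) ^ s
  have hbox : IsCompact (Set.Icc (0 : Fin n → ℝ) fun _ ↦ R) := isCompact_Icc
  filter_upwards [hbox.compl_mem_cocompact] with x hxbox ⟨hx, hxclique⟩
  contrapose! hxbox
  rw [Set.notMem_compl_iff]
  exact ⟨hx.1, fun v ↦ (le_div_iff₀ (by positivity)).2
    (apply_mul_pow_le_one hx hxclique hpos hxbox.le v)⟩

end CliqueSupport

/-- For `1 ≤ s < ω(G)`, the function `f_{s+1}(G,·)` attains a maximum on the (noncompact)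
set `S_s(G) = {x : x ≥ 0, f_s(G,x) = 1}`. -/
theorem exists_max_on_constraint {n : ℕ} (G : SimpleGraph (Fin n)) [DecidableRel G.Adj]
    (s : ℕ) (hs : 1 ≤ s) (hsw : s < G.cliqueNum) :
    ∃ y : Fin n → ℝ, (∀ i, 0 ≤ y i) ∧ fClique G s y = 1 ∧
      ∀ x : Fin n → ℝ, (∀ i, 0 ≤ x i) → fClique G s x = 1 →
        fClique G (s + 1) x ≤ fClique G (s + 1) y := by
  obtain ⟨r, rfl⟩ := Nat.exists_eq_add_of_le' hs
  obtain ⟨v, ⟨hv, hv1⟩, hvpos⟩ :=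
    exists_mem_cliqueConstraintSet_fClique_pos r.succ_ne_zero hsw
  obtain ⟨u, hu, huv, hvu, huclique⟩ := exists_isClique_support_fClique_le (G := G) (s := r) hv
  obtain ⟨y, ⟨⟨hy, hy1⟩, -⟩, hmax⟩ := exists_isMaxOn_cliqueConstraintSet_isClique_support
    ⟨hu, huv.trans hv1⟩ huclique (hvpos.trans_le hvu)
  refine ⟨y, hy, hy1, fun x hx hx1 ↦ ?_⟩
  obtain ⟨z, hz, hzx, hxz, hzclique⟩ := exists_isClique_support_fClique_le (G := G) (s := r) hx
  exact hxz.trans (hmax ⟨⟨hz, hzx.trans hx1⟩, hzclique⟩)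
end

section
/- Let G be a simple graph on vertex set [n] with clique number ω, let 1 ≤ s < ω, let x = (x_1,...,x_n) ∈ ℝ^n with all coordinates strictly positive, and let R_s be the set of vertices of G contained in some s-clique. Then ρ_{s+1}(G,x)^{1/(s+1)} = ρ_s(G,x)^{1/s} holds if and only if the subgraph of G induced by R_s is a complete ω-partite graph and, denoting its vertex classes by V_1,...,V_ω, one has Σ_{v ∈ V_i} x_v = Σ_{v ∈ V_j} x_v for all 1 ≤ i < j ≤ ω. -/
open Finset

/-!
By scaling and a small perturbation of `ρ_s`, the ratio `ρ_{s+1}^s / ρ_s^{s+1}` attains a maximum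
over nonnegative weights. There Lagrange's condition says that the links `L_v` of all vertices of
positive weight have the same ratio `ρ_s(L_v) / ρ_{s-1}(L_v) = ρ_{s+1} / ρ_s`. Inserting this in
the inequality `ρ_s(L_v)^{s-1} ≤ ρ_{s-1}(L_v)^s` and summing over `v` by Euler's identity yields
`ρ_{s+1}^{s-1} ρ_1 ≤ ρ_s^s`, which together with `ρ_s ≤ ρ_1^s` gives `ρ_{s+1}^s ≤ ρ_s^{s+1}`, by
induction on `s` from the Motzkin–Straus inequality `ρ_2 ≤ ρ_1^2`.

A positive weighting with equality is itself extremal, so that the same relations hold at it without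
perturbation and force `ρ_{s+1} = ρ_1^{s+1}`, hence `ρ_2 = ρ_1^2`. At a positive maximiser of the
quadratic form `f_2` on the simplex, the second variation in the direction `e_u + e_w - 2 e_v` shows
that non-adjacency is transitive, and the first variation that its classes have the same weight.
-/

section CliqueSum

variable {V : Type*} (G : SimpleGraph V) [DecidableRel G.Adj]

/-- The neighbourhood of `v` within the vertex set `U`, which carries the link of `v` in the
graph induced by `U`. -/
def nbhdOn (U : Finset V) (v : V) : Finset V := {w ∈ U | G.Adj v w}

variable {G} {U W : Finset V} {s : ℕ} {v w : V} {x y : V → ℝ}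

lemma mem_nbhdOn : w ∈ nbhdOn G U v ↔ w ∈ U ∧ G.Adj v w := mem_filter

lemma nbhdOn_subset : nbhdOn G U v ⊆ U := filter_subset _ _

lemma notMem_nbhdOn_self : v ∉ nbhdOn G U v := fun h => G.irrefl (mem_nbhdOn.1 h).2

lemma cliqueFreeOn_nbhdOn {N : ℕ} (hv : v ∈ U) (hU : G.CliqueFreeOn (U : Set V) (N + 1)) :
    G.CliqueFreeOn (nbhdOn G U v : Set V) N :=
  SimpleGraph.CliqueFreeOn.subset G (fun _ hw => mem_nbhdOn.1 hw) (hU.of_succ G hv)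

variable [DecidableEq V]

variable (G) in
/-- The `s`-cliques of the subgraph induced by `U`. Induced subgraphs are represented by their
vertex sets, so that they all share the weights `x : V → ℝ`. -/
def cliquesOn (U : Finset V) (s : ℕ) : Finset (Finset V) :=
  {S ∈ U.powersetCard s | G.IsClique (S : Set V)}

variable (G) in
/-- The clique polynomial `f_s(G[U], x)`. -/
def cliqueSum (U : Finset V) (s : ℕ) (x : V → ℝ) : ℝ := ∑ S ∈ cliquesOn G U s, ∏ i ∈ S, x i

lemma mem_cliquesOn {S : Finset V} : S ∈ cliquesOn G U s ↔ S ⊆ U ∧ G.IsNClique s S := by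
  rw [cliquesOn, mem_filter, mem_powersetCard, SimpleGraph.isNClique_iff]
  tauto

lemma insert_mem_cliquesOn {S : Finset V} (hvS : v ∉ S) :
    insert v S ∈ cliquesOn G U (s + 1) ↔ v ∈ U ∧ S ∈ cliquesOn G (nbhdOn G U v) s := by
  simp only [mem_cliquesOn, subset_iff, mem_nbhdOn, SimpleGraph.isNClique_iff,
    coe_insert, SimpleGraph.isClique_insert_of_notMem (mem_coe.not.2 hvS), mem_coe,
    card_insert_of_notMem hvS, Nat.add_right_cancel_iff]
  grind

lemma cliqueSum_congr (h : ∀ v ∈ U, x v = y v) : cliqueSum G U s x = cliqueSum G U s y :=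
  sum_congr rfl fun _ hS => prod_congr rfl fun v hv => h v ((mem_cliquesOn.1 hS).1 hv)

lemma prod_nonneg_of_mem_cliquesOn (hx : ∀ v ∈ U, 0 ≤ x v) {S : Finset V}
    (hS : S ∈ cliquesOn G U s) : 0 ≤ ∏ i ∈ S, x i :=
  prod_nonneg fun v hv => hx v ((mem_cliquesOn.1 hS).1 hv)

lemma cliqueSum_eq_zero (hU : G.CliqueFreeOn (U : Set V) s) : cliqueSum G U s x = 0 :=
  sum_eq_zero fun _ hS => (hU (mem_cliquesOn.1 hS).1 (mem_cliquesOn.1 hS).2).elim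

lemma cliqueSum_nonneg (hx : ∀ v ∈ U, 0 ≤ x v) : 0 ≤ cliqueSum G U s x :=
  sum_nonneg fun _ => prod_nonneg_of_mem_cliquesOn hx

lemma cliqueSum_pos (hx : ∀ v ∈ U, 0 < x v) (h : (cliquesOn G U s).Nonempty) :
    0 < cliqueSum G U s x :=
  sum_pos (fun _ hS => prod_pos fun v hv => hx v ((mem_cliquesOn.1 hS).1 hv)) h

@[simp] lemma cliqueSum_zero : cliqueSum G U 0 x = 1 := by
  simp [cliqueSum, cliquesOn, filter_singleton]

@[simp] lemma cliqueSum_one : cliqueSum G U 1 x = ∑ v ∈ U, x v := by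
  simp [cliqueSum, cliquesOn, powersetCard_one, filter_map]

lemma cliqueSum_smul (c : ℝ) : cliqueSum G U s (c • x) = c ^ s * cliqueSum G U s x := by
  rw [cliqueSum, cliqueSum, mul_sum]
  refine sum_congr rfl fun S hS => ?_
  simp [prod_mul_distrib, (mem_cliquesOn.1 hS).2.card_eq]

lemma continuous_cliqueSum : Continuous (cliqueSum G U s) := by
  unfold cliqueSum
  fun_prop

lemma sum_cliquesOn_mem (hv : v ∈ U) :
    ∑ S ∈ cliquesOn G U (s + 1) with v ∈ S, ∏ i ∈ S, x i =
      x v * cliqueSum G (nbhdOn G U v) s x := by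
  have hnot : ∀ S ∈ cliquesOn G (nbhdOn G U v) s, v ∉ S := fun S hS h =>
    notMem_nbhdOn_self ((mem_cliquesOn.1 hS).1 h)
  rw [cliqueSum, mul_sum]
  refine sum_nbij' (erase · v) (insert v) (fun S hS => ?_) (fun S hS => ?_)
    (fun S hS => insert_erase (mem_filter.1 hS).2) (fun S hS => erase_insert (hnot S hS))
    (fun S hS => (mul_prod_erase S x (mem_filter.1 hS).2).symm)
  · obtain ⟨hS, hvS⟩ := mem_filter.1 hS
    rw [← insert_erase hvS, insert_mem_cliquesOn (notMem_erase v S)] at hS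
    exact hS.2
  · exact mem_filter.2 ⟨(insert_mem_cliquesOn (hnot S hS)).2 ⟨hv, hS⟩, mem_insert_self v S⟩

/-- Euler's identity for the homogeneous polynomial `f_{s+1}`, whose partial derivatives are the
clique polynomials of the links. -/
lemma sum_mul_cliqueSum_nbhdOn :
    ∑ v ∈ U, x v * cliqueSum G (nbhdOn G U v) s x = (s + 1) * cliqueSum G U (s + 1) x := by
  have hU : ∀ S ∈ cliquesOn G U (s + 1), {v ∈ U | v ∈ S} = S := fun S hS => by
    rw [filter_mem_eq_inter, inter_eq_right.2 (mem_cliquesOn.1 hS).1]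
  calc ∑ v ∈ U, x v * cliqueSum G (nbhdOn G U v) s x
      = ∑ v ∈ U, ∑ S ∈ cliquesOn G U (s + 1) with v ∈ S, ∏ i ∈ S, x i :=
        sum_congr rfl fun v hv => (sum_cliquesOn_mem hv).symm
    _ = ∑ S ∈ cliquesOn G U (s + 1), ∑ v ∈ U with v ∈ S, ∏ i ∈ S, x i := by
        simp_rw [sum_filter]
        exact sum_comm
    _ = ∑ S ∈ cliquesOn G U (s + 1), (s + 1) * ∏ i ∈ S, x i := by
        refine sum_congr rfl fun S hS => ?_
        rw [hU S hS, sum_const, (mem_cliquesOn.1 hS).2.card_eq, nsmul_eq_mul, Nat.cast_succ]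
    _ = (s + 1) * cliqueSum G U (s + 1) x := (mul_sum ..).symm

lemma cliqueSum_update (hv : v ∈ U) (t : ℝ) :
    cliqueSum G U (s + 1) (Function.update x v (x v + t)) =
      cliqueSum G U (s + 1) x + t * cliqueSum G (nbhdOn G U v) s x := by
  have hlink : cliqueSum G (nbhdOn G U v) s (Function.update x v (x v + t)) =
      cliqueSum G (nbhdOn G U v) s x :=
    cliqueSum_congr fun w hw =>
      Function.update_of_ne (ne_of_mem_of_not_mem hw notMem_nbhdOn_self) _ _
  have hrest : ∑ S ∈ cliquesOn G U (s + 1) with v ∉ S, ∏ i ∈ S, Function.update x v (x v + t) i =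
      ∑ S ∈ cliquesOn G U (s + 1) with v ∉ S, ∏ i ∈ S, x i :=
    sum_congr rfl fun S hS => prod_update_of_notMem (mem_filter.1 hS).2 _ _
  rw [cliqueSum, cliqueSum, ← sum_filter_add_sum_filter_not _ (v ∈ ·),
    ← sum_filter_add_sum_filter_not (cliquesOn G U (s + 1)) (v ∈ ·) (fun S => ∏ i ∈ S, x i),
    sum_cliquesOn_mem hv, sum_cliquesOn_mem hv, hlink, hrest, Function.update_self]
  ring

lemma cliqueSum_le_add_sum_sdiff (hx : ∀ v ∈ U, 0 ≤ x v) (hW : W ⊆ U) :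
    cliqueSum G U (s + 1) x ≤
      cliqueSum G W (s + 1) x + ∑ v ∈ U \ W, x v * cliqueSum G (nbhdOn G U v) s x := by
  have hinside : {S ∈ cliquesOn G U (s + 1) | S ⊆ W} = cliquesOn G W (s + 1) := by
    ext S
    simp only [mem_filter, mem_cliquesOn]
    exact ⟨fun h => ⟨h.2, h.1.2⟩, fun h => ⟨⟨h.1.trans hW, h.2⟩, h.1⟩⟩
  have hterm : ∀ S ∈ cliquesOn G U (s + 1), ∏ i ∈ S, x i ≤
      (if S ⊆ W then ∏ i ∈ S, x i else 0) + ∑ v ∈ U \ W, if v ∈ S then ∏ i ∈ S, x i else 0 := by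
    intro S hS
    have hprod := prod_nonneg_of_mem_cliquesOn hx hS
    have hite : ∀ v ∈ U \ W, 0 ≤ if v ∈ S then ∏ i ∈ S, x i else 0 := fun v _ => by
      split_ifs <;> simp [hprod]
    by_cases hSW : S ⊆ W
    · simpa [hSW] using sum_nonneg hite
    · obtain ⟨v, hvS, hvW⟩ := not_subset.1 hSW
      have hvU := (mem_cliquesOn.1 hS).1 hvS
      simpa [hSW, hvS] using single_le_sum hite (mem_sdiff.2 ⟨hvU, hvW⟩)
  calc cliqueSum G U (s + 1) x
      ≤ ∑ S ∈ cliquesOn G U (s + 1), ((if S ⊆ W then ∏ i ∈ S, x i else 0) +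
          ∑ v ∈ U \ W, if v ∈ S then ∏ i ∈ S, x i else 0) := sum_le_sum hterm
    _ = cliqueSum G W (s + 1) x + ∑ v ∈ U \ W, x v * cliqueSum G (nbhdOn G U v) s x := by
        rw [sum_add_distrib, ← sum_filter, hinside, sum_comm]
        refine congrArg _ (sum_congr rfl fun v hv => ?_)
        rw [← sum_filter, sum_cliquesOn_mem (sdiff_subset hv)]

end CliqueSum

section CliqueMean

variable {V : Type*} [DecidableEq V] (G : SimpleGraph V) [DecidableRel G.Adj]

/-- The mean `ρ_s = f_s / C(N, s)` of the clique polynomial of `G[U]`, where `N` is meant to bound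
the clique number of `G[U]`. It is `0` when `N < s`. -/
noncomputable def cliqueMean (N : ℕ) (U : Finset V) (s : ℕ) (x : V → ℝ) : ℝ :=
  cliqueSum G U s x / N.choose s

variable {G} {N : ℕ} {U : Finset V} {s : ℕ} {v : V} {x y : V → ℝ}

@[simp] lemma cliqueMean_zero : cliqueMean G N U 0 x = 1 := by simp [cliqueMean]

lemma cliqueMean_one : cliqueMean G N U 1 x = (∑ v ∈ U, x v) / N := by simp [cliqueMean]

lemma cliqueMean_congr (h : ∀ v ∈ U, x v = y v) : cliqueMean G N U s x = cliqueMean G N U s y := by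
  rw [cliqueMean, cliqueMean, cliqueSum_congr h]

lemma cliqueMean_nonneg (hx : ∀ v ∈ U, 0 ≤ x v) : 0 ≤ cliqueMean G N U s x :=
  div_nonneg (cliqueSum_nonneg hx) (Nat.cast_nonneg _)

lemma cliqueMean_pos (hx : ∀ v ∈ U, 0 < x v) (hs : s ≤ N) (h : (cliquesOn G U s).Nonempty) :
    0 < cliqueMean G N U s x :=
  div_pos (cliqueSum_pos hx h) (Nat.cast_pos.2 (Nat.choose_pos hs))

lemma cliqueMean_smul (c : ℝ) : cliqueMean G N U s (c • x) = c ^ s * cliqueMean G N U s x := by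
  rw [cliqueMean, cliqueSum_smul, mul_div_assoc, ← cliqueMean]

lemma continuous_cliqueMean : Continuous (cliqueMean G N U s) :=
  continuous_cliqueSum.div_const _

lemma div_choose_succ (a : ℝ) :
    a / (N + 1).choose (s + 1) = (s + 1) / (N + 1) * (a / N.choose s) := by
  have h : ((N + 1 : ℝ)) * N.choose s = (N + 1).choose (s + 1) * (s + 1) := by
    exact_mod_cast Nat.add_one_mul_choose_eq N s
  have hN : (N + 1 : ℝ) ≠ 0 := by positivity
  have hs : (s + 1 : ℝ) ≠ 0 := by positivity
  rw [eq_div_of_mul_eq hs h.symm]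
  field_simp

lemma sum_mul_cliqueMean_nbhdOn :
    ∑ v ∈ U, x v * cliqueMean G N (nbhdOn G U v) s x =
      (N + 1) * cliqueMean G (N + 1) U (s + 1) x := by
  have hs : (s + 1 : ℝ) ≠ 0 := by positivity
  rw [cliqueMean, div_choose_succ]
  simp_rw [cliqueMean, ← mul_div_assoc, ← sum_div, sum_mul_cliqueSum_nbhdOn]
  field_simp

lemma cliqueMean_update (hv : v ∈ U) (t : ℝ) :
    cliqueMean G (N + 1) U (s + 1) (Function.update x v (x v + t)) =
      cliqueMean G (N + 1) U (s + 1) x +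
        t * ((s + 1) / (N + 1) * cliqueMean G N (nbhdOn G U v) s x) := by
  rw [cliqueMean, cliqueSum_update hv, add_div, mul_div_assoc, div_choose_succ (cliqueSum _ _ s x)]
  rfl

end CliqueMean

section MotzkinStraus

variable {V : Type*} [DecidableEq V] {G : SimpleGraph V} [DecidableRel G.Adj] {x : V → ℝ}

/-- The edges not inside the neighbourhood of a vertex of largest weighted degree are bounded by the
weighted degrees of the vertices outside of it, which leaves the link of that vertex; this is
Erdős's proof of Turán's theorem, with weights. -/
lemma cliqueSum_two_le (N : ℕ) {U : Finset V} (hx : ∀ v ∈ U, 0 ≤ x v)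
    (hU : G.CliqueFreeOn (U : Set V) (N + 2)) :
    2 * (N + 1) * cliqueSum G U 2 x ≤ N * (∑ v ∈ U, x v) ^ 2 := by
  induction N generalizing U with
  | zero => simp [cliqueSum_eq_zero hU]
  | succ N ih =>
    rcases U.eq_empty_or_nonempty with rfl | hne
    · simp [cliqueSum_eq_zero (G := G) (U := ∅) (s := 2) (by simp)]
    obtain ⟨v, hv, hmax⟩ := exists_max_image U (fun v => ∑ w ∈ nbhdOn G U v, x w) hne
    set W := nbhdOn G U v
    have hWU : W ⊆ U := nbhdOn_subset
    have hlink := ih (fun w hw => hx w (hWU hw)) (cliqueFreeOn_nbhdOn hv hU)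
    have hreduce : cliqueSum G U 2 x ≤
        cliqueSum G W 2 x + (∑ w ∈ U, x w - ∑ w ∈ W, x w) * ∑ w ∈ W, x w := by
      refine (cliqueSum_le_add_sum_sdiff hx hWU).trans (add_le_add_right ?_ _)
      rw [← sum_sdiff_eq_sub hWU, sum_mul]
      gcongr with u hu
      · exact hx u (sdiff_subset hu)
      · simpa using hmax u (sdiff_subset hu)
    push_cast
    have hN : (0 : ℝ) < N + 1 := by positivity
    refine le_of_mul_le_mul_left ?_ hN
    nlinarith [mul_le_mul_of_nonneg_left hreduce (by positivity : 0 ≤ 2 * (N + 1) * (N + 2 : ℝ)),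
      sq_nonneg ((N + 1) * ∑ w ∈ U, x w - (N + 2) * ∑ w ∈ W, x w)]

lemma cliqueMean_two_le {N : ℕ} {U : Finset V} (hx : ∀ v ∈ U, 0 ≤ x v)
    (hU : G.CliqueFreeOn (U : Set V) (N + 1)) :
    cliqueMean G N U 2 x ≤ cliqueMean G N U 1 x ^ 2 := by
  obtain _ | _ | N := N
  · simp [cliqueMean]
  · simp [cliqueMean, cliqueSum_eq_zero hU, sq_nonneg]
  have hms := cliqueSum_two_le (N + 1) hx hU
  rw [cliqueMean_one, cliqueMean, Nat.cast_choose_two, div_pow,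
    div_le_div_iff₀ (by push_cast; ring_nf; positivity) (by positivity)]
  push_cast at hms ⊢
  nlinarith

end MotzkinStraus

section Sequence

lemma pow_le_pow_of_step {a : ℕ → ℝ} (ha : ∀ i, 0 ≤ a i) {j k : ℕ} (hj : j ≠ 0) (hjk : j ≤ k)
    (h : ∀ i, j ≤ i → i < k → a (i + 1) ^ i ≤ a i ^ (i + 1)) : a k ^ j ≤ a j ^ k := by
  induction k, hjk using Nat.le_induction with
  | base => rfl
  | succ k hjk ih =>
    have hk : k ≠ 0 := by omega
    refine (pow_le_pow_iff_left₀ (pow_nonneg (ha _) _) (pow_nonneg (ha _) _) hk).1 ?_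
    calc (a (k + 1) ^ j) ^ k = (a (k + 1) ^ k) ^ j := pow_right_comm ..
      _ ≤ (a k ^ (k + 1)) ^ j :=
        pow_le_pow_left₀ (pow_nonneg (ha _) _) (h k hjk k.lt_succ_self) _
      _ = (a k ^ j) ^ (k + 1) := pow_right_comm ..
      _ ≤ (a j ^ k) ^ (k + 1) :=
        pow_le_pow_left₀ (pow_nonneg (ha _) _)
          (ih fun i hi hik => h i hi (hik.trans k.lt_succ_self)) _
      _ = (a j ^ (k + 1)) ^ k := pow_right_comm ..

end Sequence

section Extremum

open Filter Topology

lemma mul_deriv_eq_of_eventually_pow_le {f g : ℝ → ℝ} {f' g' t M : ℝ} {m n : ℕ}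
    (hf : HasDerivAt f f' t) (hg : HasDerivAt g g' t) (hft : f t ≠ 0)
    (hle : ∀ᶠ u in 𝓝 t, f u ^ m ≤ M * g u ^ n) (heq : f t ^ m = M * g t ^ n) :
    m * (f' * g t) = n * (g' * f t) := by
  have hmin : IsLocalMin (fun u => M * g u ^ n - f u ^ m) t := by
    filter_upwards [hle] with u hu
    simpa only [heq, sub_self, sub_nonneg] using hu
  have hderiv := hmin.hasDerivAt_eq_zero (((hg.pow n).const_mul M).sub (hf.pow m))
  have hpow (k : ℕ) (a : ℝ) : k * a ^ k = k * a ^ (k - 1) * a := by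
    cases k <;> simp [pow_succ, mul_assoc]
  refine mul_left_cancel₀ (pow_ne_zero m hft) ?_
  linear_combination f' * g t * hpow m (f t) - n * g' * f t * heq - g' * f t * M * hpow n (g t) -
    f t * g t * hderiv

variable {α : Type*} {U : Finset α}

/-- The weights on `U` of total weight `1`. Values outside of `U` are irrelevant, but they are
bounded as well so that the set is compact. -/
def weightSimplex (U : Finset α) : Set (α → ℝ) :=
  Set.univ.pi (fun _ => Set.Icc 0 1) ∩ {x | ∑ v ∈ U, x v = 1}

lemma isCompact_weightSimplex : IsCompact (weightSimplex U) :=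
  (isCompact_univ_pi fun _ => isCompact_Icc).inter_right
    (isClosed_eq (by fun_prop) continuous_const)

lemma weightSimplex_nonempty (hU : U.Nonempty) : (weightSimplex U).Nonempty := by
  classical
  obtain ⟨u, hu⟩ := hU
  refine ⟨Pi.single u 1, fun v _ => ?_, by simp [hu]⟩
  rcases eq_or_ne v u with rfl | h <;> simp [*]

lemma exists_mem_weightSimplex_smul {y : α → ℝ} (hy : ∀ v ∈ U, 0 ≤ y v)
    (hpos : 0 < ∑ v ∈ U, y v) :
    ∃ z ∈ weightSimplex U, ∀ v ∈ U, y v = ((∑ w ∈ U, y w) • z) v := by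
  classical
  refine ⟨fun v => if v ∈ U then y v / ∑ w ∈ U, y w else 0, ⟨fun v _ => ?_, ?_⟩, fun v hv => ?_⟩
  · by_cases hv : v ∈ U
    · simpa [hv] using ⟨div_nonneg (hy v hv) hpos.le,
        (div_le_one₀ hpos).2 (single_le_sum hy hv)⟩
    · simp [hv]
  · simp [← sum_div, hpos.ne']
  · simp [hv, mul_div_cancel₀ _ hpos.ne']

lemma exists_forall_mul_le_mul {p q : (α → ℝ) → ℝ} (hU : U.Nonempty) {d : ℕ}
    (hp : Continuous p) (hq : Continuous q)
    (hp_congr : ∀ x y, (∀ v ∈ U, x v = y v) → p x = p y)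
    (hq_congr : ∀ x y, (∀ v ∈ U, x v = y v) → q x = q y)
    (hp_smul : ∀ (c : ℝ) x, p (c • x) = c ^ d * p x)
    (hq_smul : ∀ (c : ℝ) x, q (c • x) = c ^ d * q x)
    (hq_pos : ∀ x, (∀ v ∈ U, 0 ≤ x v) → 0 < ∑ v ∈ U, x v → 0 < q x) :
    ∃ x : α → ℝ, (∀ v ∈ U, 0 ≤ x v) ∧ 0 < ∑ v ∈ U, x v ∧
      ∀ y, (∀ v ∈ U, 0 ≤ y v) → p y * q x ≤ p x * q y := by
  have hnonneg : ∀ x ∈ weightSimplex U, ∀ v ∈ U, 0 ≤ x v := fun x hx v _ => (hx.1 v trivial).1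
  have hsum : ∀ x ∈ weightSimplex U, 0 < ∑ v ∈ U, x v := fun x hx => hx.2 ▸ one_pos
  have hqpos : ∀ x ∈ weightSimplex U, 0 < q x := fun x hx => hq_pos x (hnonneg x hx) (hsum x hx)
  obtain ⟨x, hx, hmax⟩ := isCompact_weightSimplex.exists_isMaxOn (weightSimplex_nonempty hU)
    (hp.continuousOn.div hq.continuousOn fun x hx => (hqpos x hx).ne')
  refine ⟨x, hnonneg x hx, hsum x hx, fun y hy => ?_⟩
  obtain ⟨c, hc, z, hz, hyz⟩ :
      ∃ c : ℝ, 0 ≤ c ∧ ∃ z ∈ weightSimplex U, ∀ v ∈ U, y v = (c • z) v := by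
    rcases (sum_nonneg hy).eq_or_lt with h0 | hpos
    · refine ⟨0, le_rfl, x, hx, fun v hv => ?_⟩
      simp [(sum_eq_zero_iff_of_nonneg hy).1 h0.symm v hv]
    · exact ⟨_, hpos.le, exists_mem_weightSimplex_smul hy hpos⟩
  have hle : p z * q x ≤ p x * q z := (div_le_div_iff₀ (hqpos z hz) (hqpos x hx)).1 (hmax hz)
  rw [hp_congr _ _ hyz, hq_congr _ _ hyz, hp_smul, hq_smul, mul_assoc, mul_left_comm (p x)]
  exact mul_le_mul_of_nonneg_left hle (pow_nonneg hc d)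

end Extremum

section Maclaurin

open Filter Topology

variable {V : Type*} [DecidableEq V] (G : SimpleGraph V) [DecidableRel G.Adj]

/-- The mean `ρ_s` perturbed by `η ρ_1 ^ s`. Unlike `ρ_s`, it is positive at every nonzero
nonnegative weight when `0 < η`, so that the ratio `ρ_{s+1}^s / ρ_s^{s+1}` with `ρ_s` replaced by it
is continuous and has a maximum. -/
noncomputable def perturbedMean (η : ℝ) (N : ℕ) (U : Finset V) (s : ℕ) (x : V → ℝ) : ℝ :=
  cliqueMean G N U s x + η * cliqueMean G N U 1 x ^ s

variable {G} {η : ℝ} {N : ℕ} {U : Finset V} {s : ℕ} {v : V} {x y : V → ℝ}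

@[simp] lemma perturbedMean_zero_left : perturbedMean G 0 N U s x = cliqueMean G N U s x := by
  simp [perturbedMean]

lemma le_perturbedMean (hη : 0 ≤ η) (hx : ∀ v ∈ U, 0 ≤ x v) :
    cliqueMean G N U s x ≤ perturbedMean G η N U s x :=
  le_add_of_nonneg_right (mul_nonneg hη (pow_nonneg (cliqueMean_nonneg hx) _))

lemma perturbedMean_congr (h : ∀ v ∈ U, x v = y v) :
    perturbedMean G η N U s x = perturbedMean G η N U s y := by
  rw [perturbedMean, perturbedMean, cliqueMean_congr h, cliqueMean_congr h]

lemma perturbedMean_smul (c : ℝ) :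
    perturbedMean G η N U s (c • x) = c ^ s * perturbedMean G η N U s x := by
  simp only [perturbedMean, cliqueMean_smul]
  ring

lemma continuous_perturbedMean : Continuous (perturbedMean G η N U s) :=
  continuous_cliqueMean.add ((continuous_cliqueMean.pow s).const_mul η)

lemma cliqueMean_one_pos (hpos : 0 < ∑ v ∈ U, x v) : 0 < cliqueMean G (N + 1) U 1 x := by
  rw [cliqueMean_one]
  positivity

lemma perturbedMean_pos (hη : 0 < η) (hx : ∀ v ∈ U, 0 ≤ x v) (hpos : 0 < ∑ v ∈ U, x v) :
    0 < perturbedMean G η (N + 1) U s x :=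
  add_pos_of_nonneg_of_pos (cliqueMean_nonneg hx) (mul_pos hη (pow_pos (cliqueMean_one_pos hpos) s))

lemma hasDerivAt_cliqueMean_update (hv : v ∈ U) (x : V → ℝ) :
    HasDerivAt (fun t => cliqueMean G (N + 1) U (s + 1) (Function.update x v (x v + t)))
      ((s + 1) / (N + 1) * cliqueMean G N (nbhdOn G U v) s x) 0 := by
  simp_rw [cliqueMean_update hv]
  exact (hasDerivAt_mul_const _).const_add _

lemma hasDerivAt_perturbedMean_update (hv : v ∈ U) (x : V → ℝ) :
    HasDerivAt (fun t => perturbedMean G η (N + 1) U (s + 1) (Function.update x v (x v + t)))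
      ((s + 1) / (N + 1) *
        (cliqueMean G N (nbhdOn G U v) s x + η * cliqueMean G (N + 1) U 1 x ^ s)) 0 := by
  have hone := hasDerivAt_cliqueMean_update (G := G) (N := N) (s := 0) hv x
  refine ((hasDerivAt_cliqueMean_update hv x).add
    ((hone.pow (s + 1)).const_mul η)).congr_deriv ?_
  simp only [add_zero, Function.update_eq_self, Nat.cast_add, Nat.cast_one, add_tsub_cancel_right,
    Nat.cast_zero, zero_add, cliqueMean_zero, mul_one]
  ring

/-- Lagrange's condition at an extremal weighting: on the support, `ρ_{s+1}` of the link is an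
affine function of its `ρ_s`. -/
lemma cliqueMean_nbhdOn_eq_of_isExtremal {M : ℝ} (hx : ∀ v ∈ U, 0 ≤ x v)
    (ha : cliqueMean G (N + 1) U (s + 2) x ≠ 0)
    (hle : ∀ y, (∀ v ∈ U, 0 ≤ y v) → cliqueMean G (N + 1) U (s + 2) y ^ (s + 1) ≤
      M * perturbedMean G η (N + 1) U (s + 1) y ^ (s + 2))
    (heq : cliqueMean G (N + 1) U (s + 2) x ^ (s + 1) =
      M * perturbedMean G η (N + 1) U (s + 1) x ^ (s + 2)) (hv : v ∈ U) (hxv : 0 < x v) :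
    cliqueMean G N (nbhdOn G U v) (s + 1) x * perturbedMean G η (N + 1) U (s + 1) x =
      cliqueMean G (N + 1) U (s + 2) x *
        (cliqueMean G N (nbhdOn G U v) s x + η * cliqueMean G (N + 1) U 1 x ^ s) := by
  have hnear : ∀ᶠ t in 𝓝 (0 : ℝ), ∀ w ∈ U, 0 ≤ Function.update x v (x v + t) w := by
    filter_upwards [eventually_gt_nhds (neg_lt_zero.2 hxv)] with t ht w hw
    rcases eq_or_ne w v with rfl | hwv
    · rw [Function.update_self]
      linarith
    · rw [Function.update_of_ne hwv]
      exact hx w hw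
  have hderiv := mul_deriv_eq_of_eventually_pow_le (M := M) (m := s + 1) (n := s + 2)
    (hasDerivAt_cliqueMean_update hv x) (hasDerivAt_perturbedMean_update hv x)
    (by simpa using ha) (hnear.mono fun t ht => hle _ ht) (by simpa using heq)
  simp only [add_zero, Function.update_eq_self, Nat.cast_add, Nat.cast_one, Nat.cast_ofNat]
    at hderiv
  have hc : ((s + 1) * (s + 2) / (N + 1) : ℝ) ≠ 0 := by positivity
  refine mul_left_cancel₀ hc ?_
  linear_combination hderiv

/-- In each link the inequality `ρ_{s+1}^s ≤ ρ_s^{s+1}` turns the bound `r` on the ratio of the two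
means into the lower bound `r ^ s` on `ρ_s`; Euler's identity sums these bounds. -/
lemma pow_mul_cliqueMean_one_le {r : ℝ} (hr : 0 ≤ r) (hx : ∀ v ∈ U, 0 ≤ x v)
    (hpos : ∀ v ∈ U, 0 < x v → 0 < cliqueMean G N (nbhdOn G U v) s x)
    (hratio : ∀ v ∈ U, 0 < x v →
      r * cliqueMean G N (nbhdOn G U v) s x ≤ cliqueMean G N (nbhdOn G U v) (s + 1) x)
    (hlink : ∀ v ∈ U, cliqueMean G N (nbhdOn G U v) (s + 1) x ^ s ≤
      cliqueMean G N (nbhdOn G U v) s x ^ (s + 1)) :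
    r ^ s * cliqueMean G (N + 1) U 1 x ≤ cliqueMean G (N + 1) U (s + 1) x := by
  have hvertex : ∀ v ∈ U, x v * r ^ s ≤ x v * cliqueMean G N (nbhdOn G U v) s x := by
    intro v hv
    rcases (hx v hv).eq_or_lt with h0 | hxv
    · simp [← h0]
    have hδ := hpos v hv hxv
    refine mul_le_mul_of_nonneg_left (le_of_mul_le_mul_right ?_ (pow_pos hδ s)) hxv.le
    calc r ^ s * cliqueMean G N (nbhdOn G U v) s x ^ s
        = (r * cliqueMean G N (nbhdOn G U v) s x) ^ s := (mul_pow ..).symm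
      _ ≤ cliqueMean G N (nbhdOn G U v) (s + 1) x ^ s :=
        pow_le_pow_left₀ (by positivity) (hratio v hv hxv) s
      _ ≤ _ := (hlink v hv).trans_eq (pow_succ' _ s)
  have hsum := sum_le_sum hvertex
  have hN : (0 : ℝ) < N + 1 := by positivity
  rw [sum_mul_cliqueMean_nbhdOn, ← sum_mul] at hsum
  rw [cliqueMean_one, Nat.cast_succ, ← mul_div_assoc, div_le_iff₀ hN]
  linarith

/-- By Lagrange's condition, the quotient of `ρ_{s+2}` by the perturbed `ρ_{s+1}` at an extremal
weighting is a lower bound for the ratio `ρ_{s+1} / ρ_s` of every link. -/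
lemma pow_mul_cliqueMean_one_le_of_isExtremal {M : ℝ} (hη : 0 ≤ η) (hx : ∀ v ∈ U, 0 ≤ x v)
    (ha : 0 < cliqueMean G (N + 1) U (s + 2) x)
    (hD : 0 < perturbedMean G η (N + 1) U (s + 1) x)
    (hpos : ∀ v ∈ U, 0 < x v →
      0 < cliqueMean G N (nbhdOn G U v) s x + η * cliqueMean G (N + 1) U 1 x ^ s)
    (hle : ∀ y, (∀ v ∈ U, 0 ≤ y v) → cliqueMean G (N + 1) U (s + 2) y ^ (s + 1) ≤
      M * perturbedMean G η (N + 1) U (s + 1) y ^ (s + 2))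
    (heq : cliqueMean G (N + 1) U (s + 2) x ^ (s + 1) =
      M * perturbedMean G η (N + 1) U (s + 1) x ^ (s + 2))
    (hlink : ∀ v ∈ U, cliqueMean G N (nbhdOn G U v) (s + 1) x ^ s ≤
      cliqueMean G N (nbhdOn G U v) s x ^ (s + 1)) :
    cliqueMean G (N + 1) U (s + 2) x ^ s * cliqueMean G (N + 1) U 1 x ≤
      perturbedMean G η (N + 1) U (s + 1) x ^ (s + 1) := by
  have hlink_nonneg (v : V) (t : ℕ) : 0 ≤ cliqueMean G N (nbhdOn G U v) t x :=
    cliqueMean_nonneg fun w hw => hx w (nbhdOn_subset hw)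
  have hlagrange {v : V} (hv : v ∈ U) (hxv : 0 < x v) :=
    cliqueMean_nbhdOn_eq_of_isExtremal hx ha.ne' hle heq hv hxv
  have hsum := pow_mul_cliqueMean_one_le (div_pos ha hD).le hx (fun v hv hxv => ?_)
    (fun v hv hxv => ?_) hlink
  · rw [div_pow, div_mul_eq_mul_div, div_le_iff₀ (pow_pos hD s)] at hsum
    rw [pow_succ']
    exact hsum.trans (mul_le_mul_of_nonneg_right (le_perturbedMean hη hx) (pow_pos hD s).le)
  · have hprod := (mul_pos ha (hpos v hv hxv)).trans_eq (hlagrange hv hxv).symm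
    have hε := pos_of_mul_pos_left hprod hD.le
    exact (hlink_nonneg v s).lt_of_ne' fun h0 => (pow_pos hε s).not_ge <| by
      simpa [h0] using hlink v hv
  · rw [div_mul_eq_mul_div, div_le_iff₀ hD, hlagrange hv hxv]
    exact mul_le_mul_of_nonneg_left (le_add_of_nonneg_right
      (mul_nonneg hη (pow_nonneg (cliqueMean_nonneg hx) s))) ha.le

lemma pow_pow_le_mul_pow_pow {a b c d : ℝ} (ha : 0 ≤ a) (hb : 0 ≤ b) (hc : 0 ≤ c) (hd : 0 < d)
    (hab : a ^ s * b ≤ d ^ (s + 1)) (hdb : d ≤ c * b ^ (s + 1)) :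
    (a ^ (s + 1)) ^ s ≤ c * (d ^ (s + 2)) ^ s := by
  refine le_of_mul_le_mul_right ?_ hd
  calc (a ^ (s + 1)) ^ s * d ≤ (a ^ (s + 1)) ^ s * (c * b ^ (s + 1)) := by gcongr
    _ = c * (a ^ s * b) ^ (s + 1) := by ring
    _ ≤ c * (d ^ (s + 1)) ^ (s + 1) := by gcongr
    _ = c * (d ^ (s + 2)) ^ s * d := by ring

lemma pow_le_mul_pow_of_mul_le_mul {p q p' q' c : ℝ} (hp : 0 ≤ p) (hq : 0 ≤ q) (hq' : 0 < q')
    (h : p * q' ≤ p' * q) (hc : p' ^ s ≤ c * q' ^ s) : p ^ s ≤ c * q ^ s := by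
  refine le_of_mul_le_mul_right ?_ (pow_pos hq' s)
  calc p ^ s * q' ^ s = (p * q') ^ s := (mul_pow ..).symm
    _ ≤ (p' * q) ^ s := by gcongr
    _ = p' ^ s * q ^ s := mul_pow ..
    _ ≤ c * q' ^ s * q ^ s := by gcongr
    _ = c * q ^ s * q' ^ s := mul_right_comm ..

lemma exists_forall_cliqueMean_pow_mul_le (hη : 0 < η) (hU : U.Nonempty) :
    ∃ x : V → ℝ, (∀ v ∈ U, 0 ≤ x v) ∧ 0 < ∑ v ∈ U, x v ∧ ∀ y, (∀ v ∈ U, 0 ≤ y v) →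
      cliqueMean G (N + 1) U (s + 2) y ^ (s + 1) *
          perturbedMean G η (N + 1) U (s + 1) x ^ (s + 2) ≤
        cliqueMean G (N + 1) U (s + 2) x ^ (s + 1) *
          perturbedMean G η (N + 1) U (s + 1) y ^ (s + 2) :=
  exists_forall_mul_le_mul (d := (s + 1) * (s + 2))
    (p := fun y => cliqueMean G (N + 1) U (s + 2) y ^ (s + 1))
    (q := fun y => perturbedMean G η (N + 1) U (s + 1) y ^ (s + 2)) hU
    (continuous_cliqueMean.pow _) (continuous_perturbedMean.pow _)
    (fun y z h => by rw [cliqueMean_congr h]) (fun y z h => by rw [perturbedMean_congr h])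
    (fun c y => by rw [cliqueMean_smul, mul_pow, ← pow_mul, mul_comm (s + 2)])
    (fun c y => by rw [perturbedMean_smul, mul_pow, ← pow_mul])
    (fun y hy hpos => pow_pos (perturbedMean_pos hη hy hpos) _)

lemma cliqueMean_pow_le_mul_perturbedMean_pow (hs : s ≠ 0) (hη : 0 < η) (hU : U.Nonempty)
    (hlink : ∀ x : V → ℝ, (∀ v ∈ U, 0 ≤ x v) → ∀ v ∈ U,
      cliqueMean G N (nbhdOn G U v) (s + 1) x ^ s ≤ cliqueMean G N (nbhdOn G U v) s x ^ (s + 1))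
    (hone : ∀ x : V → ℝ, (∀ v ∈ U, 0 ≤ x v) →
      cliqueMean G (N + 1) U (s + 1) x ≤ cliqueMean G (N + 1) U 1 x ^ (s + 1))
    (hy : ∀ v ∈ U, 0 ≤ y v) :
    (cliqueMean G (N + 1) U (s + 2) y ^ (s + 1)) ^ s ≤
      (1 + η) * (perturbedMean G η (N + 1) U (s + 1) y ^ (s + 2)) ^ s := by
  obtain ⟨x, hx, hσ, hmax⟩ := exists_forall_cliqueMean_pow_mul_le (G := G) (N := N) (s := s) hη hU
  have hD := perturbedMean_pos (G := G) (N := N) (s := s + 1) hη hx hσ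
  have hq := pow_pos hD (s + 2)
  suffices hbound : (cliqueMean G (N + 1) U (s + 2) x ^ (s + 1)) ^ s ≤
      (1 + η) * (perturbedMean G η (N + 1) U (s + 1) x ^ (s + 2)) ^ s by
    have hDy : 0 ≤ perturbedMean G η (N + 1) U (s + 1) y :=
      (cliqueMean_nonneg hy).trans (le_perturbedMean hη.le hy)
    exact pow_le_mul_pow_of_mul_le_mul (pow_nonneg (cliqueMean_nonneg hy) _) (pow_nonneg hDy _) hq
      (hmax y hy) hbound
  rcases (cliqueMean_nonneg (G := G) (N := N + 1) (s := s + 2) hx).eq_or_lt with ha | ha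
  · rw [← ha, zero_pow s.succ_ne_zero, zero_pow hs]
    positivity
  refine pow_pow_le_mul_pow_pow ha.le (cliqueMean_nonneg hx) (by positivity) hD
    (pow_mul_cliqueMean_one_le_of_isExtremal hη.le hx ha hD (fun v _ _ => ?_)
      (fun y hy => ?_) (div_mul_cancel₀ _ hq.ne').symm (hlink x hx)) ?_
  · exact add_pos_of_nonneg_of_pos (cliqueMean_nonneg fun w hw => hx w (nbhdOn_subset hw))
      (mul_pos hη (pow_pos (cliqueMean_one_pos hσ) s))
  · rw [div_mul_eq_mul_div, le_div_iff₀ hq]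
    exact hmax y hy
  · rw [perturbedMean, one_add_mul]
    gcongr
    exact hone x hx

lemma cliqueMean_pow_le_pow_of_nbhdOn (hs : s ≠ 0)
    (hlink : ∀ x : V → ℝ, (∀ v ∈ U, 0 ≤ x v) → ∀ v ∈ U,
      cliqueMean G N (nbhdOn G U v) (s + 1) x ^ s ≤ cliqueMean G N (nbhdOn G U v) s x ^ (s + 1))
    (hone : ∀ x : V → ℝ, (∀ v ∈ U, 0 ≤ x v) →
      cliqueMean G (N + 1) U (s + 1) x ≤ cliqueMean G (N + 1) U 1 x ^ (s + 1))
    (hx : ∀ v ∈ U, 0 ≤ x v) :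
    cliqueMean G (N + 1) U (s + 2) x ^ (s + 1) ≤ cliqueMean G (N + 1) U (s + 1) x ^ (s + 2) := by
  rcases U.eq_empty_or_nonempty with rfl | hU
  · simp [cliqueMean, cliqueSum_eq_zero (G := G) (U := ∅)]
  have hlim : Tendsto (fun η => (1 + η) *
      (perturbedMean G η (N + 1) U (s + 1) x ^ (s + 2)) ^ s) (𝓝[>] 0)
      (𝓝 ((cliqueMean G (N + 1) U (s + 1) x ^ (s + 2)) ^ s)) := by
    refine (Continuous.tendsto' ?_ _ _ (by simp)).mono_left nhdsWithin_le_nhds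
    unfold perturbedMean
    fun_prop
  refine (pow_le_pow_iff_left₀ (pow_nonneg (cliqueMean_nonneg hx) _)
    (pow_nonneg (cliqueMean_nonneg hx) _) hs).1 (ge_of_tendsto hlim ?_)
  filter_upwards [self_mem_nhdsWithin] with η hη
  exact cliqueMean_pow_le_mul_perturbedMean_pow hs hη hU hlink hone hx

theorem cliqueMean_succ_pow_le (hx : ∀ v ∈ U, 0 ≤ x v)
    (hU : G.CliqueFreeOn (U : Set V) (N + 1)) :
    cliqueMean G N U (s + 1) x ^ s ≤ cliqueMean G N U s x ^ (s + 1) := by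
  induction s using Nat.strong_induction_on generalizing N U x with
  | _ s ih
  obtain _ | _ | s := s
  · simp
  · simpa using cliqueMean_two_le hx hU
  obtain _ | N := N
  · simp [cliqueMean]
  refine cliqueMean_pow_le_pow_of_nbhdOn s.succ_ne_zero (fun y hy v hv => ?_) (fun y hy => ?_) hx
  · exact ih (s + 1) (Nat.lt_succ_self _) (fun w hw => hy w (nbhdOn_subset hw))
      (cliqueFreeOn_nbhdOn hv hU)
  · simpa using pow_le_pow_of_step (a := fun t => cliqueMean G (N + 1) U t y)
      (fun _ => cliqueMean_nonneg hy) one_ne_zero (Nat.le_add_left 1 (s + 1))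
      fun i _ hi => ih i hi hy hU

lemma cliqueMean_pow_le_pow {j k : ℕ} (hj : j ≠ 0) (hjk : j ≤ k) (hx : ∀ v ∈ U, 0 ≤ x v)
    (hU : G.CliqueFreeOn (U : Set V) (N + 1)) :
    cliqueMean G N U k x ^ j ≤ cliqueMean G N U j x ^ k :=
  pow_le_pow_of_step (a := fun t => cliqueMean G N U t x) (fun _ => cliqueMean_nonneg hx) hj hjk
    fun _ _ _ => cliqueMean_succ_pow_le hx hU

end Maclaurin

section Equality

open Filter Topology

variable {V : Type*} [DecidableEq V] {G : SimpleGraph V} [DecidableRel G.Adj] {N : ℕ}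
  {U : Finset V} {s : ℕ} {u v w : V} {x h : V → ℝ}

lemma pow_le_of_pow_mul_le {a b c : ℝ} (ha : 0 < a) (hb : 0 < b) (hc : 0 ≤ c)
    (hac : a ^ s * c ≤ b ^ (s + 1)) (heq : a ^ (s + 1) = b ^ (s + 2)) : c ^ (s + 2) ≤ a := by
  have hcb : c ^ (s + 1) ≤ b := by
    refine le_of_mul_le_mul_left ?_ (pow_pos (pow_pos hb (s + 2)) s)
    calc (b ^ (s + 2)) ^ s * c ^ (s + 1) = (a ^ s * c) ^ (s + 1) := by
          rw [← heq]
          ring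
      _ ≤ (b ^ (s + 1)) ^ (s + 1) := by gcongr
      _ = (b ^ (s + 2)) ^ s * b := by ring
  refine (pow_le_pow_iff_left₀ (pow_nonneg hc _) ha.le s.succ_ne_zero).1 ?_
  calc (c ^ (s + 2)) ^ (s + 1) = (c ^ (s + 1)) ^ (s + 2) := pow_right_comm ..
    _ ≤ b ^ (s + 2) := by gcongr
    _ = a ^ (s + 1) := heq.symm

lemma cliqueMean_two_eq_of_cliqueMean_eq (hx : ∀ v ∈ U, 0 ≤ x v)
    (hU : G.CliqueFreeOn (U : Set V) (N + 2)) (ha : 0 < cliqueMean G (N + 1) U (s + 2) x)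
    (hb : 0 < cliqueMean G (N + 1) U (s + 1) x)
    (hlink : ∀ v ∈ U, 0 < cliqueMean G N (nbhdOn G U v) s x)
    (heq : cliqueMean G (N + 1) U (s + 2) x ^ (s + 1) =
      cliqueMean G (N + 1) U (s + 1) x ^ (s + 2)) :
    cliqueMean G (N + 1) U 2 x = cliqueMean G (N + 1) U 1 x ^ 2 := by
  have hone : 0 ≤ cliqueMean G (N + 1) U 1 x := cliqueMean_nonneg hx
  have hextremal : cliqueMean G (N + 1) U (s + 2) x ^ s * cliqueMean G (N + 1) U 1 x ≤
      cliqueMean G (N + 1) U (s + 1) x ^ (s + 1) := by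
    simpa using pow_mul_cliqueMean_one_le_of_isExtremal (η := 0) (M := 1) le_rfl hx ha
      (by simpa using hb) (by simpa using fun v hv _ => hlink v hv)
      (fun y hy => by simpa using cliqueMean_succ_pow_le hy hU) (by simpa using heq)
      (fun v hv => cliqueMean_succ_pow_le (fun w hw => hx w (nbhdOn_subset hw))
        (cliqueFreeOn_nbhdOn hv hU))
  refine (cliqueMean_two_le hx hU).antisymm ?_
  refine (pow_le_pow_iff_left₀ (sq_nonneg _) (cliqueMean_nonneg hx) (s + 1).succ_ne_zero).1 ?_
  calc (cliqueMean G (N + 1) U 1 x ^ 2) ^ (s + 2) = (cliqueMean G (N + 1) U 1 x ^ (s + 2)) ^ 2 :=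
        pow_right_comm ..
    _ ≤ cliqueMean G (N + 1) U (s + 2) x ^ 2 :=
        pow_le_pow_left₀ (pow_nonneg hone _) (pow_le_of_pow_mul_le ha hb hone hextremal heq) 2
    _ ≤ cliqueMean G (N + 1) U 2 x ^ (s + 2) :=
        cliqueMean_pow_le_pow two_ne_zero (Nat.le_add_left 2 s) hx hU

lemma sum_mul_sum_nbhdOn :
    ∑ v ∈ U, x v * ∑ w ∈ nbhdOn G U v, x w = 2 * cliqueSum G U 2 x := by
  simpa [one_add_one_eq_two] using sum_mul_cliqueSum_nbhdOn (G := G) (U := U) (s := 1) (x := x)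

lemma cliqueSum_two_add_add_cliqueSum_two_sub (x h : V → ℝ) :
    cliqueSum G U 2 (x + h) + cliqueSum G U 2 (x - h) =
      2 * cliqueSum G U 2 x + 2 * cliqueSum G U 2 h := by
  have hsum : ∑ v ∈ U, (x + h) v * ∑ w ∈ nbhdOn G U v, (x + h) w +
      ∑ v ∈ U, (x - h) v * ∑ w ∈ nbhdOn G U v, (x - h) w =
      2 * ∑ v ∈ U, x v * ∑ w ∈ nbhdOn G U v, x w +
        2 * ∑ v ∈ U, h v * ∑ w ∈ nbhdOn G U v, h w := by
    rw [mul_sum, mul_sum, ← sum_add_distrib, ← sum_add_distrib]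
    refine sum_congr rfl fun v _ => ?_
    simp only [Pi.add_apply, Pi.sub_apply, sum_add_distrib, sum_sub_distrib]
    ring
  simp only [sum_mul_sum_nbhdOn] at hsum
  linarith

lemma cliqueSum_two_le_of_sum_eq {y : V → ℝ} (hy : ∀ v ∈ U, 0 ≤ y v)
    (hU : G.CliqueFreeOn (U : Set V) (N + 1))
    (heq : cliqueMean G N U 2 x = cliqueMean G N U 1 x ^ 2) (hxy : ∑ v ∈ U, y v = ∑ v ∈ U, x v) :
    cliqueSum G U 2 y ≤ cliqueSum G U 2 x := by
  rcases lt_or_ge N 2 with hN | hN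
  · have hfree := hU.mono G (Nat.succ_le_of_lt hN)
    rw [cliqueSum_eq_zero hfree, cliqueSum_eq_zero hfree]
  have hle := cliqueMean_two_le hy hU
  rw [cliqueMean_one, hxy, ← cliqueMean_one (G := G), ← heq] at hle
  exact (div_le_div_iff_of_pos_right (Nat.cast_pos.2 (Nat.choose_pos hN))).1 hle

/-- The second variation of `f_2` at a positive maximiser on the simplex. -/
lemma cliqueSum_two_nonpos (hx : ∀ v ∈ U, 0 < x v) (hU : G.CliqueFreeOn (U : Set V) (N + 1))
    (heq : cliqueMean G N U 2 x = cliqueMean G N U 1 x ^ 2) (hh : ∑ v ∈ U, h v = 0) :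
    cliqueSum G U 2 h ≤ 0 := by
  have hnear (k : V → ℝ) : ∀ᶠ t in 𝓝[>] (0 : ℝ), ∀ v ∈ U, 0 ≤ (x + t • k) v := by
    refine ((eventually_all_finset U).2 fun v hv => ?_).filter_mono nhdsWithin_le_nhds
    have hcont : Continuous fun t : ℝ => (x + t • k) v := by
      simp only [Pi.add_apply, Pi.smul_apply]
      fun_prop
    exact (hcont.tendsto' 0 (x v) (by simp)).eventually_const_le (hx v hv)
  obtain ⟨t, ⟨hadd, hsub⟩, ht⟩ :=
    (((hnear h).and (hnear (-h))).and self_mem_nhdsWithin).exists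
  rw [smul_neg, ← sub_eq_add_neg] at hsub
  have hle_add := cliqueSum_two_le_of_sum_eq hadd hU heq (by simp [sum_add_distrib, ← mul_sum, hh])
  have hle_sub := cliqueSum_two_le_of_sum_eq hsub hU heq (by simp [← mul_sum, hh])
  have hpar := cliqueSum_two_add_add_cliqueSum_two_sub (G := G) (U := U) x (t • h)
  rw [cliqueSum_smul] at hpar
  exact nonpos_of_mul_nonpos_right (by linarith) (pow_pos (Set.mem_Ioi.1 ht) 2)

lemma not_adj_trans (hx : ∀ v ∈ U, 0 < x v) (hU : G.CliqueFreeOn (U : Set V) (N + 1))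
    (heq : cliqueMean G N U 2 x = cliqueMean G N U 1 x ^ 2) (hu : u ∈ U) (hv : v ∈ U)
    (hw : w ∈ U) (huv : ¬ G.Adj u v) (hvw : ¬ G.Adj v w) : ¬ G.Adj u w := by
  intro huw
  set h : V → ℝ := Pi.single u 1 + Pi.single w 1 - 2 • Pi.single v 1 with hdef
  have hh : ∑ v ∈ U, h v = 0 := by
    simp [hdef, sum_add_distrib, ← mul_sum, hu, hv, hw, one_add_one_eq_two]
  have hnonpos := cliqueSum_two_nonpos hx hU heq hh
  have hlink (a : V) : ∑ b ∈ nbhdOn G U a, h b =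
      (if u ∈ nbhdOn G U a then 1 else 0) + (if w ∈ nbhdOn G U a then 1 else 0) -
        2 * (if v ∈ nbhdOn G U a then 1 else 0) := by
    simp [hdef, sum_add_distrib, ← mul_sum]
  have hquad : 2 * cliqueSum G U 2 h = 2 := by
    rw [← sum_mul_sum_nbhdOn]
    simp_rw [hlink]
    simp [hdef, add_mul, sub_mul, sum_add_distrib, Pi.single_apply, hu, hv, hw, mem_nbhdOn,
      huv, hvw, huw, huw.symm, G.adj_comm w v, G.adj_comm v u, one_add_one_eq_two]
  linarith

lemma sum_nbhdOn_eq (hx : ∀ v ∈ U, 0 < x v) (hU : G.CliqueFreeOn (U : Set V) (N + 2))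
    (heq : cliqueMean G (N + 1) U 2 x = cliqueMean G (N + 1) U 1 x ^ 2) (hv : v ∈ U) :
    ∑ w ∈ nbhdOn G U v, x w = N * cliqueMean G (N + 1) U 1 x := by
  have hone : 0 < cliqueMean G (N + 1) U 1 x := cliqueMean_one_pos (sum_pos hx ⟨v, hv⟩)
  have hlagrange : cliqueMean G N (nbhdOn G U v) 1 x = cliqueMean G (N + 1) U 1 x := by
    have h := cliqueMean_nbhdOn_eq_of_isExtremal (s := 0) (η := 0) (M := 1)
      (fun v hv => (hx v hv).le) (heq.trans_ne (pow_ne_zero 2 hone.ne'))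
      (fun y hy => by simpa using cliqueMean_two_le hy hU) (by simpa using heq) hv (hx v hv)
    refine mul_right_cancel₀ hone.ne' ?_
    simpa [heq, sq] using h
  have hN : (N : ℝ) ≠ 0 := fun h0 => hone.ne' <| by
    rw [← hlagrange, cliqueMean_one, h0, div_zero]
  rw [← hlagrange, cliqueMean_one, mul_div_cancel₀ _ hN]

end Equality

section Multipartite

variable {V ι : Type*} {G : SimpleGraph V} {U : Finset V} {P : ι → Finset V} {i j : ι} {v : V}

lemma exists_not_adj_of_cliqueFreeOn [Fintype ι] {k : ι → V} (hk : ∀ i, k i ∈ U)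
    (hadj : Pairwise fun i j => G.Adj (k i) (k j))
    (hU : G.CliqueFreeOn (U : Set V) (Fintype.card ι + 1)) (hv : v ∈ U) :
    ∃ i, ¬ G.Adj (k i) v := by
  classical
  by_contra! hall
  have hinj : Function.Injective k := fun i j hij => by_contra fun hne => (hadj hne).ne hij
  refine cliqueFreeOn_nbhdOn hv hU (t := univ.image k) ?_ ⟨?_, ?_⟩
  · simpa [Set.range_subset_iff, mem_nbhdOn, hk] using fun i => (hall i).symm
  · rintro _ hi _ hj hne
    obtain ⟨i, -, rfl⟩ := mem_image.1 hi
    obtain ⟨j, -, rfl⟩ := mem_image.1 hj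
    exact hadj fun h => hne (h ▸ rfl)
  · rw [card_image_of_injective _ hinj, card_univ]

variable (G) in
/-- The sets `P i` are the vertex classes of a complete multipartite induced subgraph of `G`. They
are automatically disjoint, since `G` has no loops. -/
structure IsCompleteMultipartition (P : ι → Finset V) : Prop where
  not_adj : ∀ i, ∀ u ∈ P i, ∀ w ∈ P i, ¬ G.Adj u w
  adj : ∀ i j, i ≠ j → ∀ u ∈ P i, ∀ w ∈ P j, G.Adj u w

namespace IsCompleteMultipartition

lemma disjoint (hP : IsCompleteMultipartition G P) (hij : i ≠ j) : Disjoint (P i) (P j) :=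
  disjoint_left.2 fun u hui huj => G.irrefl (hP.adj i j hij u hui u huj)

variable [DecidableEq V] [DecidableRel G.Adj]

lemma nbhdOn_biUnion [DecidableEq ι] (hP : IsCompleteMultipartition G P) {I : Finset ι}
    (hv : v ∈ P i) : nbhdOn G (I.biUnion P) v = (I.erase i).biUnion P := by
  ext w
  simp only [mem_nbhdOn, mem_biUnion, mem_erase]
  constructor
  · rintro ⟨⟨j, hj, hw⟩, hvw⟩
    exact ⟨j, ⟨fun hji => hP.not_adj i v hv w (hji ▸ hw) hvw, hj⟩, hw⟩
  · rintro ⟨j, ⟨hji, hj⟩, hw⟩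
    exact ⟨⟨j, hj, hw⟩, hP.adj i j hji.symm v hv w hw⟩

lemma cliqueMean_biUnion {x : V → ℝ} (hP : IsCompleteMultipartition G P) {m : ℝ}
    (hm : ∀ i, ∑ v ∈ P i, x v = m) {t : ℕ} {I : Finset ι} (ht : t ≤ #I) :
    cliqueMean G #I (I.biUnion P) t x = m ^ t := by
  classical
  induction t generalizing I with
  | zero => simp
  | succ t ih =>
    obtain ⟨N, hN⟩ := Nat.exists_eq_add_of_lt (Nat.zero_lt_of_lt ht)
    rw [zero_add] at hN
    have hlink : ∀ i ∈ I, ∀ v ∈ P i, cliqueMean G N (nbhdOn G (I.biUnion P) v) t x = m ^ t := by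
      intro i hi v hv
      have hcard : #(I.erase i) = N := by rw [card_erase_of_mem hi, hN, Nat.add_sub_cancel]
      rw [hP.nbhdOn_biUnion hv, ← hcard]
      exact ih (by omega)
    have hN0 : (N + 1 : ℝ) ≠ 0 := by positivity
    refine mul_left_cancel₀ hN0 ?_
    calc (N + 1) * cliqueMean G #I (I.biUnion P) (t + 1) x
        = ∑ i ∈ I, ∑ v ∈ P i, x v * cliqueMean G N (nbhdOn G (I.biUnion P) v) t x := by
          rw [hN, ← sum_mul_cliqueMean_nbhdOn, sum_biUnion fun i _ j _ hij => hP.disjoint hij]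
      _ = ∑ i ∈ I, (∑ v ∈ P i, x v) * m ^ t :=
          sum_congr rfl fun i hi => by
            rw [sum_mul]
            exact sum_congr rfl fun v hv => by rw [hlink i hi v hv]
      _ = (N + 1) * m ^ (t + 1) := by
          simp only [hm, sum_const, hN, nsmul_eq_mul]
          push_cast
          ring

end IsCompleteMultipartition

lemma isCompleteMultipartition_sdiff_nbhdOn [DecidableEq V] [DecidableRel G.Adj] {k : ι → V}
    (hk : ∀ i, k i ∈ U) (hadj : Pairwise fun i j => G.Adj (k i) (k j))
    (htrans : ∀ u ∈ U, ∀ v ∈ U, ∀ w ∈ U, ¬ G.Adj u v → ¬ G.Adj v w → ¬ G.Adj u w) :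
    IsCompleteMultipartition G fun i => U \ nbhdOn G U (k i) := by
  have hmem {i : ι} {v : V} (hv : v ∈ U \ nbhdOn G U (k i)) : v ∈ U ∧ ¬ G.Adj (k i) v := by
    grind [mem_nbhdOn]
  refine ⟨fun i u hu w hw => ?_, fun i j hij u hu w hw => by_contra fun huw => ?_⟩
  · exact htrans u (hmem hu).1 (k i) (hk i) w (hmem hw).1 (fun h => (hmem hu).2 h.symm) (hmem hw).2
  · exact htrans (k i) (hk i) u (hmem hu).1 (k j) (hk j) (hmem hu).2
      (htrans u (hmem hu).1 w (hmem hw).1 (k j) (hk j) huw fun h => (hmem hw).2 h.symm) (hadj hij)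

lemma exists_isCompleteMultipartition_of_cliqueMean_two_eq [DecidableEq V] [DecidableRel G.Adj]
    [Fintype ι] {x : V → ℝ} (hx : ∀ v ∈ U, 0 < x v) {N : ℕ} (hι : Fintype.card ι = N + 1)
    (hU : G.CliqueFreeOn (U : Set V) (N + 2)) {k : ι → V} (hk : ∀ i, k i ∈ U)
    (hadj : Pairwise fun i j => G.Adj (k i) (k j))
    (heq : cliqueMean G (N + 1) U 2 x = cliqueMean G (N + 1) U 1 x ^ 2) :
    ∃ P : ι → Finset V, IsCompleteMultipartition G P ∧ (∀ i, (P i).Nonempty) ∧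
      univ.biUnion P = U ∧ ∀ i j, ∑ v ∈ P i, x v = ∑ v ∈ P j, x v := by
  refine ⟨fun i => U \ nbhdOn G U (k i), isCompleteMultipartition_sdiff_nbhdOn hk hadj
    fun u hu v hv w hw => not_adj_trans hx hU heq hu hv hw,
    fun i => ⟨k i, mem_sdiff.2 ⟨hk i, notMem_nbhdOn_self⟩⟩, ?_, fun i j => ?_⟩
  · ext v
    simp only [mem_biUnion, mem_univ, true_and, mem_sdiff, mem_nbhdOn, not_and]
    refine ⟨fun ⟨_, hv, _⟩ => hv, fun hv => ?_⟩
    obtain ⟨i, hi⟩ := exists_not_adj_of_cliqueFreeOn hk hadj (by rwa [hι]) hv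
    exact ⟨i, hv, fun _ => hi⟩
  · rw [sum_sdiff_eq_sub nbhdOn_subset, sum_sdiff_eq_sub nbhdOn_subset,
      sum_nbhdOn_eq hx hU heq (hk i), sum_nbhdOn_eq hx hU heq (hk j)]

end Multipartite

section CliqueVertices

lemma cliqueFreeOn_cliqueNum_add_one {V : Type*} [Finite V] {G : SimpleGraph V} (U : Finset V) :
    G.CliqueFreeOn (U : Set V) (G.cliqueNum + 1) := fun _ _ hS =>
  (Nat.lt_succ_self _).not_ge (hS.card_eq.symm.trans_le hS.isClique.card_le_cliqueNum)

variable {V : Type*} [Fintype V] [DecidableEq V] (G : SimpleGraph V) [DecidableRel G.Adj]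

/-- The set `R_s` of vertices contained in some `s`-clique. -/
def cliqueVertices (s : ℕ) : Finset V := {v | ∃ S ∈ G.cliqueFinset s, v ∈ S}

variable {G} {s t : ℕ} {v : V} {x : V → ℝ}

lemma mem_cliqueVertices : v ∈ cliqueVertices G s ↔ ∃ S ∈ G.cliqueFinset s, v ∈ S := by
  simp [cliqueVertices]

lemma cliquesOn_cliqueVertices (hs : s ≠ 0) (hst : s ≤ t) :
    cliquesOn G (cliqueVertices G s) t = G.cliqueFinset t := by
  ext S
  rw [mem_cliquesOn, SimpleGraph.mem_cliqueFinset_iff, and_iff_right_iff_imp]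
  intro hS v hv
  obtain ⟨T, hvT, hTS, hT⟩ := exists_subsuperset_card_eq (singleton_subset_iff.2 hv)
    (by rw [card_singleton]; omega) (hst.trans_eq hS.card_eq.symm)
  exact mem_cliqueVertices.2 ⟨T, SimpleGraph.mem_cliqueFinset_iff.2
    ⟨hS.isClique.subset (coe_subset.2 hTS), hT⟩, singleton_subset_iff.1 hvT⟩

lemma cliqueSum_cliqueVertices (hs : s ≠ 0) (hst : s ≤ t) :
    cliqueSum G (cliqueVertices G s) t x = ∑ S ∈ G.cliqueFinset t, ∏ i ∈ S, x i := by
  rw [cliqueSum, cliquesOn_cliqueVertices hs hst]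

lemma cliqueFinset_nonempty (ht : t ≤ G.cliqueNum) : (G.cliqueFinset t).Nonempty := by
  obtain ⟨K, hK⟩ := G.exists_isNClique_cliqueNum
  obtain ⟨T, hTK, hT⟩ := exists_subset_card_eq (ht.trans_eq hK.card_eq.symm)
  exact ⟨T, SimpleGraph.mem_cliqueFinset_iff.2 ⟨hK.isClique.subset (coe_subset.2 hTK), hT⟩⟩

lemma cliquesOn_nbhdOn_nonempty (hv : v ∈ cliqueVertices G (s + 1)) :
    (cliquesOn G (nbhdOn G (cliqueVertices G (s + 1)) v) s).Nonempty := by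
  obtain ⟨S, hS, hvS⟩ := mem_cliqueVertices.1 hv
  rw [← cliquesOn_cliqueVertices s.succ_ne_zero le_rfl, ← insert_erase hvS,
    insert_mem_cliquesOn (notMem_erase v S)] at hS
  exact ⟨_, hS.2⟩

lemma exists_clique_cliqueVertices (hs : s ≠ 0) (hsω : s ≤ G.cliqueNum) :
    ∃ k : Fin G.cliqueNum → V, (∀ i, k i ∈ cliqueVertices G s) ∧
      Pairwise fun i j => G.Adj (k i) (k j) := by
  obtain ⟨K, hK⟩ := G.exists_isNClique_cliqueNum
  have hKmem : K ∈ cliquesOn G (cliqueVertices G s) G.cliqueNum := by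
    rwa [cliquesOn_cliqueVertices hs hsω, SimpleGraph.mem_cliqueFinset_iff]
  let e := K.equivFinOfCardEq hK.card_eq
  exact ⟨fun i => e.symm i, fun i => (mem_cliquesOn.1 hKmem).1 (e.symm i).2, fun i j hij =>
    hK.isClique (e.symm i).2 (e.symm j).2 fun h => hij (e.symm.injective (Subtype.ext h))⟩

lemma cliqueMean_cliqueVertices_pos (hs : s ≠ 0) (hst : s ≤ t) (ht : t ≤ G.cliqueNum)
    (hx : ∀ v ∈ cliqueVertices G s, 0 < x v) :
    0 < cliqueMean G G.cliqueNum (cliqueVertices G s) t x :=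
  cliqueMean_pos hx ht <| by
    rw [cliquesOn_cliqueVertices hs hst]
    exact cliqueFinset_nonempty ht

lemma cliqueMean_two_eq_of_cliqueMean_cliqueVertices_eq (hs : s ≠ 0) (hsω : s < G.cliqueNum)
    (hx : ∀ v ∈ cliqueVertices G s, 0 < x v)
    (heq : cliqueMean G G.cliqueNum (cliqueVertices G s) (s + 1) x ^ s =
      cliqueMean G G.cliqueNum (cliqueVertices G s) s x ^ (s + 1)) :
    cliqueMean G G.cliqueNum (cliqueVertices G s) 2 x =
      cliqueMean G G.cliqueNum (cliqueVertices G s) 1 x ^ 2 := by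
  have hfree := cliqueFreeOn_cliqueNum_add_one (G := G) (cliqueVertices G s)
  have hpos {t : ℕ} (hst : s ≤ t) (ht : t ≤ G.cliqueNum) :=
    cliqueMean_cliqueVertices_pos hs hst ht hx
  obtain ⟨s, rfl⟩ := Nat.exists_eq_add_one_of_ne_zero hs
  obtain ⟨N, hN⟩ := Nat.exists_eq_add_one_of_ne_zero (Nat.ne_zero_of_lt hsω)
  rw [hN] at hsω heq hfree hpos ⊢
  have hsN : s ≤ N := Nat.le_of_lt (Nat.lt_of_succ_lt_succ hsω)
  have hlink : ∀ v ∈ cliqueVertices G (s + 1),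
      0 < cliqueMean G N (nbhdOn G (cliqueVertices G (s + 1)) v) s x := fun v hv =>
    cliqueMean_pos (fun w hw => hx w (nbhdOn_subset hw)) hsN (cliquesOn_nbhdOn_nonempty hv)
  exact cliqueMean_two_eq_of_cliqueMean_eq (fun v hv => (hx v hv).le) hfree
    (hpos (Nat.le_succ _) hsω) (hpos le_rfl hsω.le) hlink heq

theorem cliqueMean_cliqueVertices_eq_iff (hs : s ≠ 0) (hsω : s < G.cliqueNum)
    (hx : ∀ v ∈ cliqueVertices G s, 0 < x v) :
    cliqueMean G G.cliqueNum (cliqueVertices G s) (s + 1) x ^ s =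
        cliqueMean G G.cliqueNum (cliqueVertices G s) s x ^ (s + 1) ↔
      ∃ P : Fin G.cliqueNum → Finset V, IsCompleteMultipartition G P ∧ (∀ i, (P i).Nonempty) ∧
        univ.biUnion P = cliqueVertices G s ∧ ∀ i j, ∑ v ∈ P i, x v = ∑ v ∈ P j, x v := by
  constructor
  · intro heq
    have htwo := cliqueMean_two_eq_of_cliqueMean_cliqueVertices_eq hs hsω hx heq
    obtain ⟨k, hk, hadj⟩ := exists_clique_cliqueVertices hs hsω.le
    have hfree := cliqueFreeOn_cliqueNum_add_one (G := G) (cliqueVertices G s)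
    have hω : Fintype.card (Fin G.cliqueNum) = G.cliqueNum := Fintype.card_fin _
    obtain ⟨N, hN⟩ := Nat.exists_eq_add_one_of_ne_zero (Nat.ne_zero_of_lt hsω)
    rw [hN] at hfree htwo
    exact exists_isCompleteMultipartition_of_cliqueMean_two_eq hx (hω.trans hN) hfree hk
      hadj htwo
  · rintro ⟨P, hP, -, hR, hsum⟩
    have hmean {t : ℕ} (ht : t ≤ G.cliqueNum) :
        cliqueMean G G.cliqueNum (cliqueVertices G s) t x =
          (∑ v ∈ P ⟨s, hsω⟩, x v) ^ t := by
      simpa [hR] using hP.cliqueMean_biUnion (G := G) (fun i => hsum i ⟨s, hsω⟩) (I := univ)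
        (by simpa using ht)
    rw [hmean hsω, hmean hsω.le]
    exact pow_right_comm ..

end CliqueVertices

lemma rpow_one_div_eq_rpow_one_div_iff {a b : ℝ} (ha : 0 ≤ a) (hb : 0 ≤ b) {m n : ℕ} (hm : m ≠ 0)
    (hn : n ≠ 0) : a ^ ((1 : ℝ) / m) = b ^ ((1 : ℝ) / n) ↔ a ^ n = b ^ m := by
  rw [← pow_left_inj₀ (Real.rpow_nonneg ha _) (Real.rpow_nonneg hb _) (mul_ne_zero hm hn),
    pow_mul, mul_comm, pow_mul, one_div, one_div, Real.rpow_inv_natCast_pow ha hm,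
    Real.rpow_inv_natCast_pow hb hn]

theorem equality_cases_general {V : Type*} [Fintype V] [DecidableEq V] (G : SimpleGraph V)
    [DecidableRel G.Adj] {s : ℕ} (hs : 1 ≤ s) (hsω : s < G.cliqueNum) {x : V → ℝ}
    (hx : ∀ v ∈ cliqueVertices G s, 0 < x v) :
    ((∑ S ∈ G.cliqueFinset (s + 1), ∏ i ∈ S, x i) / (G.cliqueNum.choose (s + 1) : ℝ)) ^
          ((1 : ℝ) / ((s : ℝ) + 1)) =
        ((∑ S ∈ G.cliqueFinset s, ∏ i ∈ S, x i) / (G.cliqueNum.choose s : ℝ)) ^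
          ((1 : ℝ) / (s : ℝ)) ↔
      ∃ P : Fin G.cliqueNum → Finset V,
        (∀ i, (P i).Nonempty) ∧
        (∀ i j, i ≠ j → Disjoint (P i) (P j)) ∧
        (∀ v, (∃ S ∈ G.cliqueFinset s, v ∈ S) ↔ ∃ i, v ∈ P i) ∧
        (∀ i, ∀ u ∈ P i, ∀ w ∈ P i, ¬ G.Adj u w) ∧
        (∀ i j, i ≠ j → ∀ u ∈ P i, ∀ w ∈ P j, G.Adj u w) ∧
        (∀ i j, ∑ v ∈ P i, x v = ∑ v ∈ P j, x v) := by
  have hs0 : s ≠ 0 := Nat.ne_zero_of_lt hs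
  have hnonneg (t : ℕ) : 0 ≤ cliqueMean G G.cliqueNum (cliqueVertices G s) t x :=
    cliqueMean_nonneg fun v hv => (hx v hv).le
  rw [← cliqueSum_cliqueVertices hs0 s.le_succ, ← cliqueSum_cliqueVertices hs0 le_rfl,
    ← cliqueMean, ← cliqueMean, ← Nat.cast_succ,
    rpow_one_div_eq_rpow_one_div_iff (hnonneg _) (hnonneg _) s.succ_ne_zero hs0,
    cliqueMean_cliqueVertices_eq_iff hs0 hsω hx]
  refine exists_congr fun P => ⟨?_, ?_⟩
  · rintro ⟨hP, hne, hR, hsum⟩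
    refine ⟨hne, fun i j => hP.disjoint, fun v => ?_, hP.not_adj, hP.adj, hsum⟩
    rw [← mem_cliqueVertices, ← hR]
    simp [mem_biUnion]
  · rintro ⟨hne, -, hR, hnot, hadj, hsum⟩
    refine ⟨⟨hnot, hadj⟩, hne, ?_, hsum⟩
    ext v
    rw [mem_cliqueVertices, hR]
    simp [mem_biUnion]

/-- Cases of equality: for `x > 0` and `1 ≤ s < ω`, one has
`ρ_{s+1}(G,x)^{1/(s+1)} = ρ_s(G,x)^{1/s}` if and only if the set `R_s` of vertices lying in
some `s`-clique induces a complete `ω`-partite graph whose vertex classes `V_1, …, V_ω`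
satisfy `Σ_{v ∈ V_i} x_v = Σ_{v ∈ V_j} x_v` for all `i, j`. -/
theorem equality_cases {n : ℕ} (G : SimpleGraph (Fin n)) [DecidableRel G.Adj]
    (s : ℕ) (hs : 1 ≤ s) (hsw : s < G.cliqueNum)
    (x : Fin n → ℝ) (hx : ∀ i, 0 < x i) :
    (fClique G (s + 1) x / (G.cliqueNum.choose (s + 1) : ℝ)) ^ ((1 : ℝ) / ((s : ℝ) + 1))
        = (fClique G s x / (G.cliqueNum.choose s : ℝ)) ^ ((1 : ℝ) / (s : ℝ))
      ↔ ∃ V : Fin G.cliqueNum → Finset (Fin n),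
          (∀ i, (V i).Nonempty) ∧
          (∀ i j, i ≠ j → Disjoint (V i) (V j)) ∧
          (∀ v : Fin n, (∃ S ∈ G.cliqueFinset s, v ∈ S) ↔ ∃ i, v ∈ V i) ∧
          (∀ i, ∀ u ∈ V i, ∀ w ∈ V i, ¬ G.Adj u w) ∧
          (∀ i j, i ≠ j → ∀ u ∈ V i, ∀ w ∈ V j, G.Adj u w) ∧
          (∀ i j, ∑ v ∈ V i, x v = ∑ v ∈ V j, x v) := by
  exact equality_cases_general G hs hsw fun v _ => hx v
end
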